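/- arXiv:math/9504209 — 4 statements merged into one kernel-verified Lean document; each statement's English description precedes it below -/
import Mathlib

section
/- Let A, B ∈ SL(2,ℂ) generate a discrete subgroup whose image in PSL(2,ℂ) is not isomorphic to DihedralGroup m for any m : ℕ, let A be elliptic of order n ≥ 3, and suppose γ(A,B) = β(A) (so the parameter triple of ⟨A,B⟩ is (β(A), β(A), β(B))). Then for every C ∈ SL(2,ℂ), max{‖C·A·C⁻¹‖², ‖C·B·C⁻¹‖²} ≥ 2·t(n). -/
open Matrix Real

noncomputable section

abbrev SL2C := Matrix.SpecialLinearGroup (Fin 2) ℂ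

/-- The Frobenius (Hilbert–Schmidt) norm of a 2×2 complex matrix. -/
def fnorm (A : Matrix (Fin 2) (Fin 2) ℂ) : ℝ :=
  @norm _ Matrix.frobeniusSeminormedAddCommGroup.toNorm A

instance : TopologicalSpace SL2C :=
  TopologicalSpace.induced (fun g => (g : Matrix (Fin 2) (Fin 2) ℂ)) inferInstance

/-- A subgroup of `SL(2,ℂ)` is discrete if it is a discrete subspace of `SL(2,ℂ)`. -/
def IsDiscreteSubgroup (Γ : Subgroup SL2C) : Prop := DiscreteTopology Γ

/-- `A` is elliptic of order `n`: `A^n = ±1` but `A^k ≠ ±1` for `1 ≤ k < n`. -/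
def IsEllipticOfOrder (A : SL2C) (n : ℕ) : Prop :=
  (A ^ n = 1 ∨ A ^ n = -1) ∧ ∀ k : ℕ, 1 ≤ k → k < n → A ^ k ≠ 1 ∧ A ^ k ≠ -1

/-- `A` is parabolic: `A ≠ ±1` and `tr A = ±2`. -/
def IsParabolic (A : SL2C) : Prop :=
  A ≠ 1 ∧ A ≠ -1 ∧ (Matrix.trace (A : Matrix (Fin 2) (Fin 2) ℂ) = 2 ∨
    Matrix.trace (A : Matrix (Fin 2) (Fin 2) ℂ) = -2)

/-- `S` and `T` have a common eigenvector in `ℂ²`. -/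
def HasCommonEigenvector (S T : SL2C) : Prop :=
  ∃ v : Fin 2 → ℂ, v ≠ 0 ∧ (∃ a : ℂ, (S : Matrix (Fin 2) (Fin 2) ℂ).mulVec v = a • v) ∧
    (∃ b : ℂ, (T : Matrix (Fin 2) (Fin 2) ℂ).mulVec v = b • v)

/-- A subgroup of `SL(2,ℂ)` is nonelementary if it contains two elements `S`, `T`
with `S^k ≠ ±1 ≠ T^k` for all `k ≥ 1` having no common eigenvector in `ℂ²`. -/
def IsNonelementary (Γ : Subgroup SL2C) : Prop :=
  ∃ S ∈ Γ, ∃ T ∈ Γ, (∀ k : ℕ, 1 ≤ k → S ^ k ≠ 1 ∧ S ^ k ≠ -1) ∧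
    (∀ k : ℕ, 1 ≤ k → T ^ k ≠ 1 ∧ T ^ k ≠ -1) ∧ ¬ HasCommonEigenvector S T

/-- The trace parameter `β(A) = tr²(A) - 4`. -/
def βp (A : SL2C) : ℂ := (Matrix.trace (A : Matrix (Fin 2) (Fin 2) ℂ)) ^ 2 - 4

/-- The commutator parameter `γ(A,B) = tr [A,B] - 2`. -/
def γp (A B : SL2C) : ℂ :=
  Matrix.trace ((A * B * A⁻¹ * B⁻¹ : SL2C) : Matrix (Fin 2) (Fin 2) ℂ) - 2

/-- `PSL(2,ℂ)`, the quotient of `SL(2,ℂ)` by its center `{1, -1}`. -/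
abbrev PSL2C := SL2C ⧸ Subgroup.center SL2C

/-- The image in `PSL(2,ℂ)` of a subgroup of `SL(2,ℂ)`. -/
def pslImage (Γ : Subgroup SL2C) : Subgroup PSL2C :=
  Γ.map (QuotientGroup.mk' (Subgroup.center SL2C))

open Classical in
/-- `t5`: the unique real `t > 1` with
`t (t - cos²(π/5)) + (t-1) √((t+1)(t+1-2 cos²(π/5))) = 1/2`. -/
def t5 : ℝ :=
  if h : ∃ t : ℝ, 1 < t ∧
      t * (t - Real.cos (π / 5) ^ 2) +
        (t - 1) * Real.sqrt ((t + 1) * (t + 1 - 2 * Real.cos (π / 5) ^ 2)) = 1 / 2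
  then h.choose else 0

/-- The value `t n = cosh (c n)` where `c n` is the sharp displacement bound for
discrete nonelementary groups with an elliptic generator of order `n ≥ 3`. -/
def tOf : ℕ → ℝ
  | 3 => (2 * Real.sqrt (8 + 2 * Real.sqrt 5) - (1 + Real.sqrt 5)) / (6 - Real.sqrt 5)
  | 4 => (Real.sqrt (6 + 2 * Real.sqrt 3) - Real.sqrt 3) / (3 - Real.sqrt 3)
  | 5 => t5
  | 6 => 17 / 16
  | n => (5 - 2 * Real.sin (π / n) ^ 2) / (4 + 2 * Real.sin (π / n) ^ 2)

open Filter Topology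

lemma fnorm_sq (M : Matrix (Fin 2) (Fin 2) ℂ) :
    fnorm M ^ 2 = ‖M 0 0‖^2 + ‖M 0 1‖^2 + ‖M 1 0‖^2 + ‖M 1 1‖^2 := by
  unfold fnorm
  have h := @Matrix.frobenius_norm_def (Fin 2) (Fin 2) ℂ _ _ _ M
  erw [h]
  rw [← Real.sqrt_eq_rpow, Real.sq_sqrt (by positivity)]
  simp [Fin.sum_univ_two]
  ring

lemma conjT_two (a b c d : ℂ) : (!![a, b; c, d] : Matrix (Fin 2) (Fin 2) ℂ)ᴴ =
    !![starRingEnd ℂ a, starRingEnd ℂ c; starRingEnd ℂ b, starRingEnd ℂ d] := by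
  ext i j
  fin_cases i <;> fin_cases j <;> rfl

lemma inv_two (C : SL2C) : (C⁻¹ : SL2C).1 = !![C.1 1 1, -C.1 0 1; -C.1 1 0, C.1 0 0] := by
  rw [Matrix.SpecialLinearGroup.SL2_inv_expl]
  rfl

lemma fnorm_sq_trace (M : Matrix (Fin 2) (Fin 2) ℂ) :
    ((fnorm M ^ 2 : ℝ) : ℂ) = trace (Mᴴ * M) := by
  rw [fnorm_sq]
  simp [trace_fin_two, Matrix.mul_apply, Fin.sum_univ_two, ← Complex.conj_mul']
  ring

lemma conj_fnorm (C : SL2C) : ∃ (h1 h2 : ℝ) (h : ℂ), 0 < h1 ∧ h1 * h2 = 1 + ‖h‖^2 ∧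
    ∀ M : SL2C, ((fnorm ((C * M * C⁻¹ : SL2C) : Matrix (Fin 2) (Fin 2) ℂ) ^ 2 : ℝ) : ℂ) =
      trace (!![(h2:ℂ), -h; -(starRingEnd ℂ h), (h1:ℂ)] * (M : Matrix (Fin 2) (Fin 2) ℂ)ᴴ *
        !![(h1:ℂ), h; starRingEnd ℂ h, (h2:ℂ)] * (M : Matrix (Fin 2) (Fin 2) ℂ)) := by
  have hdet : C.1 0 0 * C.1 1 1 - C.1 0 1 * C.1 1 0 = 1 := by
    have := C.2; rwa [det_fin_two] at this
  have hdet' := congrArg (starRingEnd ℂ) hdet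
  simp only [map_sub, map_mul, map_one] at hdet'
  refine ⟨‖C.1 0 0‖^2 + ‖C.1 1 0‖^2, ‖C.1 0 1‖^2 + ‖C.1 1 1‖^2,
    (starRingEnd ℂ (C.1 0 0)) * C.1 0 1 + (starRingEnd ℂ (C.1 1 0)) * C.1 1 1, ?_, ?_, ?_⟩
  · by_contra hc
    have h0 : ‖C.1 0 0‖^2 = 0 := by nlinarith [sq_nonneg ‖C.1 0 0‖, sq_nonneg ‖C.1 1 0‖]
    have h1 : ‖C.1 1 0‖^2 = 0 := by nlinarith [sq_nonneg ‖C.1 0 0‖, sq_nonneg ‖C.1 1 0‖]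
    have h0' : C.1 0 0 = 0 := by simpa using h0
    have h1' : C.1 1 0 = 0 := by simpa using h1
    rw [h0', h1'] at hdet
    simp at hdet
  · rw [← Complex.ofReal_inj]
    push_cast
    simp only [← Complex.conj_mul', map_add, map_mul, Complex.conj_conj]
    linear_combination (starRingEnd ℂ) (C.1 0 0) * (starRingEnd ℂ) (C.1 1 1) * hdet -
      (starRingEnd ℂ) (C.1 0 1) * (starRingEnd ℂ) (C.1 1 0) * hdet + hdet'
  · intro M
    rw [fnorm_sq_trace]
    have e1 : (C : Matrix (Fin 2) (Fin 2) ℂ)ᴴ * C = !![((‖C.1 0 0‖^2 + ‖C.1 1 0‖^2 : ℝ) : ℂ), (starRingEnd ℂ (C.1 0 0)) * C.1 0 1 + (starRingEnd ℂ (C.1 1 0)) * C.1 1 1; starRingEnd ℂ ((starRingEnd ℂ (C.1 0 0)) * C.1 0 1 + (starRingEnd ℂ (C.1 1 0)) * C.1 1 1), ((‖C.1 0 1‖^2 + ‖C.1 1 1‖^2 : ℝ) : ℂ)] := by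
      ext i j
      fin_cases i <;> fin_cases j <;>
        simp [Matrix.mul_apply, Fin.sum_univ_two, ← Complex.conj_mul'] <;> ring
    have e2 : (C⁻¹ : SL2C).1 * ((C⁻¹ : SL2C) : Matrix (Fin 2) (Fin 2) ℂ)ᴴ = !![((‖C.1 0 1‖^2 + ‖C.1 1 1‖^2 : ℝ) : ℂ), -((starRingEnd ℂ (C.1 0 0)) * C.1 0 1 + (starRingEnd ℂ (C.1 1 0)) * C.1 1 1); -starRingEnd ℂ ((starRingEnd ℂ (C.1 0 0)) * C.1 0 1 + (starRingEnd ℂ (C.1 1 0)) * C.1 1 1), ((‖C.1 0 0‖^2 + ‖C.1 1 0‖^2 : ℝ) : ℂ)] := by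
      rw [inv_two, conjT_two, Matrix.mul_fin_two]
      ext i j
      fin_cases i <;> fin_cases j <;>
        simp [Matrix.mul_apply, Fin.sum_univ_two, ← Complex.conj_mul'] <;> ring
    rw [← e1, ← e2]
    simp only [Matrix.SpecialLinearGroup.coe_mul, conjTranspose_mul]
    rw [← Matrix.mul_assoc, Matrix.trace_mul_comm]
    simp only [Matrix.mul_assoc]

lemma norm_A (A : SL2C) (a : ℂ) (ha : ‖a‖ = 1)
    (hA : (A : Matrix (Fin 2) (Fin 2) ℂ) = !![a, 0; 0, a⁻¹]) (h1 h2 : ℝ) (h : ℂ)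
    (hh : h1 * h2 = 1 + ‖h‖^2) (F : ℝ)
    (H : (F : ℂ) =
      trace (!![(h2:ℂ), -h; -(starRingEnd ℂ h), (h1:ℂ)] * (A : Matrix (Fin 2) (Fin 2) ℂ)ᴴ *
        !![(h1:ℂ), h; starRingEnd ℂ h, (h2:ℂ)] * (A : Matrix (Fin 2) (Fin 2) ℂ))) :
    F = 2 + ‖h‖^2 * ‖1 - a^2‖^2 := by
  have ha0 : a ≠ 0 := by rintro rfl; simp at ha
  have hc : starRingEnd ℂ a * a = 1 := by rw [Complex.conj_mul', ha]; simp
  have hc' : starRingEnd ℂ a = a⁻¹ := eq_inv_of_mul_eq_one_left hc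
  have hh' : (h1 : ℂ) * h2 = 1 + starRingEnd ℂ h * h := by
    rw [Complex.conj_mul']; exact_mod_cast hh
  rw [← Complex.ofReal_inj, H, hA]
  push_cast
  simp only [← Complex.conj_mul']
  simp only [conjT_two, Matrix.mul_fin_two, trace_fin_two_of, map_sub, map_mul, map_inv₀, map_pow, map_one, map_zero, hc']
  field_simp
  linear_combination (2 * a^2) * hh'

lemma norm_B (B : SL2C) (p : ℂ)
    (hB : (B : Matrix (Fin 2) (Fin 2) ℂ) = !![p, 1; -1, 0]) (h1 h2 : ℝ) (h : ℂ) (h1p : 0 < h1)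
    (hh : h1 * h2 = 1 + ‖h‖^2) (F : ℝ)
    (H : (F : ℂ) =
      trace (!![(h2:ℂ), -h; -(starRingEnd ℂ h), (h1:ℂ)] * (B : Matrix (Fin 2) (Fin 2) ℂ)ᴴ *
        !![(h1:ℂ), h; starRingEnd ℂ h, (h2:ℂ)] * (B : Matrix (Fin 2) (Fin 2) ℂ))) :
    F = ‖p - h * (h1⁻¹ : ℝ)‖^2 + ‖h‖^2 * h1⁻¹^2 + h1⁻¹^2 +
      ‖1 - h * (h1⁻¹ : ℝ) * (p - h * (h1⁻¹ : ℝ))‖^2 * h1^2 := by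
  have h10 : (h1 : ℂ) ≠ 0 := by exact_mod_cast h1p.ne'
  have hh' : (h2 : ℂ) = (1 + starRingEnd ℂ h * h) / h1 := by
    rw [Complex.conj_mul']; field_simp; exact_mod_cast (by linarith)
  rw [← Complex.ofReal_inj, H, hB]
  push_cast
  simp only [← Complex.conj_mul']
  simp only [conjT_two, Matrix.mul_fin_two, trace_fin_two_of, map_sub, map_mul, map_inv₀, map_neg, map_one, map_zero, Complex.conj_ofReal, hh']
  field_simp
  ring

lemma ineq_B (p h : ℂ) (t P κ l : ℝ) (ht : 0 < t) (hP0 : 0 ≤ P) (hP : P ≤ ‖p‖) (hl : 0 ≤ l)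
    (hl1 : l < 1)
    (hd : ‖h‖^2 * (κ + l)^2 ≤ (1 - l) * (1 + ‖h‖^2 * (1 - l) - κ^2)) :
    2 * κ + l * P^2 ≤ ‖p - h * (t : ℝ)‖^2 + ‖h‖^2 * t^2 + t^2 +
      ‖1 - h * (t : ℝ) * (p - h * (t : ℝ))‖^2 * t⁻¹^2 := by
  set w := p - h * (t : ℝ) with hw
  have hr : P ≤ ‖w‖ + ‖h‖ * t := by
    have : ‖p‖ ≤ ‖w‖ + ‖h * (t:ℂ)‖ := by
      have := norm_add_le w (h * (t:ℂ)); rw [hw] at this ⊢; simpa using this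
    rw [norm_mul, Complex.norm_real, Real.norm_of_nonneg ht.le] at this
    linarith
  have h2 : (1 - ‖h‖ * t * ‖w‖)^2 ≤ ‖1 - h * (t : ℝ) * w‖^2 := by
    apply sq_le_sq'
    · have := norm_sub_norm_le (h * (t : ℝ) * w) 1
      rw [norm_sub_rev, norm_mul, norm_mul, Complex.norm_real, Real.norm_of_nonneg ht.le] at this
      simp at this ⊢; linarith
    · have := norm_sub_norm_le 1 (h * (t : ℝ) * w)
      rw [norm_mul, norm_mul, Complex.norm_real, Real.norm_of_nonneg ht.le] at this
      simpa using this
  have h3 : (1 - ‖h‖ * t * ‖w‖)^2 * t⁻¹^2 ≤ ‖1 - h * (t : ℝ) * w‖^2 * t⁻¹^2 := by gcongr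
  have h4 : (1 - ‖h‖ * t * ‖w‖)^2 * t⁻¹^2 = (t⁻¹ - ‖h‖ * ‖w‖)^2 := by field_simp
  generalize ‖h‖ = e at *
  generalize hrw : ‖w‖ = r at *
  have hst : t⁻¹ * t = 1 := by field_simp
  generalize t⁻¹ = s at *
  have h5 : P^2 ≤ (r + e * t)^2 := by gcongr
  have h6 : 0 ≤ (1 - l) * ((1-l) * r^2 + t^2 * (1 + e^2 * (1-l) - κ^2) - 2 * e * (κ + l) * (r * t)) := by
    nlinarith [sq_nonneg ((1-l) * r - e * (κ + l) * t), mul_le_mul_of_nonneg_right hd (sq_nonneg t)]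
  have h7 := nonneg_of_mul_nonneg_right h6 (by linarith)
  have h8 := mul_le_mul_of_nonneg_left h5 hl
  have h9 : κ * (s * t) = κ := by rw [hst, mul_one]
  nlinarith [sq_nonneg (s - e * r - κ * t)]
def SeqDisc (Γ : Subgroup SL2C) : Prop :=
  ∀ (g : ℕ → SL2C) (h : SL2C), (∀ k, g k ∈ Γ) → h ∈ Γ →
    (∀ i j, Tendsto (fun k => (g k).1 i j) atTop (𝓝 (h.1 i j))) → ∃ k, g k = h

lemma seqDisc_of_discrete (Γ : Subgroup SL2C) (hd : IsDiscreteSubgroup Γ) : SeqDisc Γ := by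
  intro g h hg hh ht
  unfold IsDiscreteSubgroup at hd
  have h1 : Tendsto g atTop (𝓝 h) := by
    have hi : Topology.IsInducing (fun g : SL2C => (g : Matrix (Fin 2) (Fin 2) ℂ)) := ⟨rfl⟩
    rw [hi.tendsto_nhds_iff]
    refine tendsto_pi_nhds.2 fun i => tendsto_pi_nhds.2 fun j => ht i j
  have h2 : Tendsto (fun k => (⟨g k, hg k⟩ : Γ)) atTop (𝓝 ⟨h, hh⟩) := by
    rw [tendsto_subtype_rng]
    exact h1
  rw [nhds_discrete, tendsto_pure] at h2
  obtain ⟨k, hk⟩ := h2.exists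
  exact ⟨k, congrArg Subtype.val hk⟩

lemma seqDisc_conj (Γ : Subgroup SL2C) (hd : SeqDisc Γ) (P : SL2C) :
    SeqDisc (Γ.map (MulAut.conj P).toMonoidHom) := by
  intro g h hg hh ht
  have key : ∀ x : SL2C, x ∈ Γ.map (MulAut.conj P).toMonoidHom → P⁻¹ * x * P ∈ Γ := by
    rintro x ⟨y, hy, rfl⟩
    simpa [mul_assoc] using hy
  obtain ⟨k, hk⟩ := hd (fun k => P⁻¹ * g k * P) (P⁻¹ * h * P) (fun k => key _ (hg k)) (key _ hh) (by
    intro i j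
    simp only [Matrix.SpecialLinearGroup.coe_mul, Matrix.mul_apply, Fin.sum_univ_two]
    have := ht 0 0
    have := ht 0 1
    have := ht 1 0
    have := ht 1 1
    refine Tendsto.add (Tendsto.mul_const _ (Tendsto.add ?_ ?_)) (Tendsto.mul_const _ (Tendsto.add ?_ ?_)) <;>
    exact Tendsto.const_mul _ (ht _ _))
  exact ⟨k, by simpa using hk⟩

def Tr (τ : ℂ) : SL2C := ⟨!![1, τ; 0, 1], by simp [det_fin_two]⟩

lemma conj_Tr (g : SL2C) (τ : ℂ) : (g * Tr τ * g⁻¹).1 =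
    !![1 - g.1 0 0 * g.1 1 0 * τ, g.1 0 0 ^ 2 * τ; - (g.1 1 0 ^ 2 * τ), 1 + g.1 0 0 * g.1 1 0 * τ] := by
  have hdet : g.1 0 0 * g.1 1 1 - g.1 0 1 * g.1 1 0 = 1 := by
    have := g.2; rwa [det_fin_two] at this
  have hg : g.1 = !![g.1 0 0, g.1 0 1; g.1 1 0, g.1 1 1] := Matrix.eta_fin_two _
  rw [Matrix.SpecialLinearGroup.coe_mul, Matrix.SpecialLinearGroup.coe_mul, inv_two]
  generalize g.1 0 0 = a at *
  generalize g.1 0 1 = b at *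
  generalize g.1 1 0 = c at *
  generalize g.1 1 1 = d at *
  rw [hg, Tr, Matrix.mul_fin_two, Matrix.mul_fin_two]
  ext i j
  fin_cases i <;> fin_cases j <;> simp <;> first | ring1 | linear_combination hdet | linear_combination -hdet

lemma shimizu (Γ : Subgroup SL2C) (hd : SeqDisc Γ) (τ : ℂ) (hτ : τ ≠ 0) (hT : Tr τ ∈ Γ)
    (g : SL2C) (hg : g ∈ Γ) (hc : g.1 1 0 ≠ 0) : 1 ≤ ‖g.1 1 0 * τ‖ := by
  by_contra hlt
  push Not at hlt
  set μ := ‖g.1 1 0 * τ‖ with hμ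
  have hμ0 : 0 ≤ μ := norm_nonneg _
  set G : ℕ → SL2C := fun k => (fun x => x * Tr τ * x⁻¹)^[k] g with hG
  have hG0 : G 0 = g := rfl
  have hGs : ∀ k, G (k+1) = G k * Tr τ * (G k)⁻¹ := fun k => by
    simp only [hG, Function.iterate_succ_apply']
  have hmem : ∀ k, G k ∈ Γ := by
    intro k
    induction k with
    | zero => exact hg
    | succ k ih => rw [hGs]; exact Γ.mul_mem (Γ.mul_mem ih hT) (Γ.inv_mem ih)
  have e00 : ∀ k, (G (k+1)).1 0 0 = 1 - (G k).1 0 0 * ((G k).1 1 0 * τ) := fun k => by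
    rw [hGs, conj_Tr]; simp [mul_assoc]
  have e01 : ∀ k, (G (k+1)).1 0 1 = (G k).1 0 0 ^ 2 * τ := fun k => by
    rw [hGs, conj_Tr]; simp
  have e10 : ∀ k, (G (k+1)).1 1 0 = - ((G k).1 1 0 ^ 2 * τ) := fun k => by
    rw [hGs, conj_Tr]; simp
  have e11 : ∀ k, (G (k+1)).1 1 1 = 1 + (G k).1 0 0 * ((G k).1 1 0 * τ) := fun k => by
    rw [hGs, conj_Tr]; simp [mul_assoc]
  have hc0 : ∀ k, (G k).1 1 0 ≠ 0 := by
    intro k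
    induction k with
    | zero => exact hc
    | succ k ih => rw [e10]; simp [ih, hτ]
  have hcb : ∀ k, ‖(G k).1 1 0 * τ‖ ≤ μ ^ (k+1) := by
    intro k
    induction k with
    | zero => simp [hG0, hμ]
    | succ k ih =>
      have : (G (k+1)).1 1 0 * τ = - ((G k).1 1 0 * τ)^2 := by rw [e10]; ring
      rw [this, norm_neg, norm_pow]
      calc ‖(G k).1 1 0 * τ‖^2 ≤ (μ^(k+1))^2 := by gcongr
        _ = μ^(2*k+2) := by ring
        _ ≤ μ^(k+1+1) := pow_le_pow_of_le_one hμ0 hlt.le (by omega)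
  set M := ‖g.1 0 0‖ + 1/(1-μ) with hM
  have h1μ : 0 < 1 - μ := by linarith
  have hM0 : 0 ≤ M := by positivity
  have hM1 : 1 ≤ M * (1 - μ) := by
    rw [hM, add_mul, div_mul_cancel₀ _ h1μ.ne']
    nlinarith [norm_nonneg (g.1 0 0)]
  have hab : ∀ k, ‖(G k).1 0 0‖ ≤ M := by
    intro k
    induction k with
    | zero => rw [hG0, hM]; have : 0 ≤ 1/(1-μ) := by positivity
              linarith
    | succ k ih =>
      rw [e00]
      have h1 : ‖(G k).1 1 0 * τ‖ ≤ μ := (hcb k).trans (pow_le_of_le_one hμ0 hlt.le (by omega))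
      calc _ ≤ ‖(1:ℂ)‖ + ‖(G k).1 0 0 * ((G k).1 1 0 * τ)‖ := norm_sub_le _ _
        _ ≤ 1 + M * μ := by rw [norm_mul, norm_one]; gcongr
        _ ≤ M := by linarith
  have hμt : Tendsto (fun k => μ^(k+1)) atTop (𝓝 0) :=
    (tendsto_pow_atTop_nhds_zero_of_lt_one hμ0 hlt).comp (tendsto_add_atTop_nat 1)
  have hct : Tendsto (fun k => (G k).1 1 0 * τ) atTop (𝓝 0) :=
    squeeze_zero_norm hcb hμt
  have hact : Tendsto (fun k => (G k).1 0 0 * ((G k).1 1 0 * τ)) atTop (𝓝 0) := by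
    refine squeeze_zero_norm (a := fun k => M * μ^(k+1)) (fun k => ?_) (by simpa using hμt.const_mul M)
    rw [norm_mul]
    exact mul_le_mul (hab k) (hcb k) (norm_nonneg _) hM0
  have h00 : Tendsto (fun k => (G (k+1)).1 0 0) atTop (𝓝 1) := by
    simp only [e00]
    simpa using hact.const_sub 1
  have h00' : Tendsto (fun k => (G k).1 0 0) atTop (𝓝 1) := (tendsto_add_atTop_iff_nat 1).1 h00
  have h11 : Tendsto (fun k => (G (k+1)).1 1 1) atTop (𝓝 1) := by
    simp only [e11]
    simpa using hact.const_add 1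
  have h01 : Tendsto (fun k => (G (k+1)).1 0 1) atTop (𝓝 τ) := by
    simp only [e01]
    simpa using (h00'.pow 2).mul_const τ
  have h10 : Tendsto (fun k => (G (k+1)).1 1 0) atTop (𝓝 0) := by
    have := ((hct.pow 2).neg).mul_const τ⁻¹
    simp only [e10]
    refine (Tendsto.congr (fun k => ?_) (by simpa using this))
    field_simp
  obtain ⟨k, hk⟩ := hd (fun k => G (k+1)) (Tr τ) (fun k => hmem _) hT (by
    intro i j
    fin_cases i <;> fin_cases j <;> simpa [Tr])
  apply hc0 (k+1)
  have hk' : G (k+1) = Tr τ := hk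
  rw [hk']
  rfl

lemma no_contract (L : ℂ → Prop) (hL : ∀ τ, L τ → τ ≠ 0 → 1 ≤ ‖τ‖) (x : ℂ) (hx0 : x ≠ 0)
    (hx : ‖x‖ < 1) (hx' : ∀ τ, L τ → L (x * τ)) (τ : ℂ) (h : L τ) (hτ : τ ≠ 0) : False := by
  have h1 : ∀ m : ℕ, L (x^m * τ) := by
    intro m
    induction m with
    | zero => simpa
    | succ m ih => rw [pow_succ', mul_assoc]; exact hx' _ ih
  have h2 : Tendsto (fun m : ℕ => ‖x^m * τ‖) atTop (𝓝 0) := by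
    have := (tendsto_pow_atTop_nhds_zero_of_norm_lt_one hx).mul_const τ
    simpa using this.norm
  obtain ⟨m, hm⟩ := (h2.eventually_lt_const one_pos).exists
  exact absurd (hL _ (h1 m) (by simp [hx0, hτ])) (not_le.2 hm)

lemma normsq_add (ζ : ℂ) (h : ‖ζ‖ = 1) : ‖1 + ζ‖^2 = 2 + 2 * ζ.re := by
  have h2 : ζ.re^2 + ζ.im^2 = 1 := by
    have := Complex.sq_norm ζ
    rw [h, Complex.normSq_apply] at this; linarith
  rw [Complex.sq_norm, Complex.normSq_apply]; simp; linarith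

lemma normsq_sub (ζ : ℂ) (h : ‖ζ‖ = 1) : ‖1 - ζ‖^2 = 2 - 2 * ζ.re := by
  have := normsq_add (-ζ) (by simpa)
  rw [← sub_eq_add_neg] at this
  rw [this]; simp; ring

lemma re_of_quad (ζ : ℂ) (h : ‖ζ‖ = 1) (y : ℝ) (hy : ζ^2 + 1 = y * ζ) : 2 * ζ.re = y := by
  have h0 : ζ ≠ 0 := by rintro rfl; simp at h
  have hc : starRingEnd ℂ ζ * ζ = 1 := by rw [Complex.conj_mul', h]; simp
  have : ζ + starRingEnd ℂ ζ = y := by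
    apply mul_right_cancel₀ h0
    linear_combination hy + hc
  rw [Complex.add_conj] at this
  exact_mod_cast this

lemma crystal (n : ℕ) (hn : 3 ≤ n) (ζ : ℂ) (hζ : IsPrimitiveRoot ζ n) (L : ℂ → Prop)
    (hL : ∀ τ, L τ → τ ≠ 0 → 1 ≤ ‖τ‖) (ha : ∀ τ σ, L τ → L σ → L (τ + σ))
    (hneg : ∀ τ, L τ → L (-τ)) (hm : ∀ τ, L τ → L (ζ * τ)) (τ : ℂ) (hτ : L τ) (hτ0 : τ ≠ 0) :
    n = 3 ∨ n = 4 ∨ n = 6 := by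
  have hz1 : ‖ζ‖ = 1 := hζ.norm'_eq_one (by omega)
  have hmk : ∀ k : ℕ, ∀ τ, L τ → L (ζ^k * τ) := by
    intro k
    induction k with
    | zero => intro τ h; simpa
    | succ k ih => intro τ h; rw [pow_succ', mul_assoc]; exact hm _ (ih _ h)
  have hadd : ∀ k : ℕ, ∀ τ, L τ → L ((1 + ζ^k) * τ) := by
    intro k τ h; rw [add_mul, one_mul]; exact ha _ _ h (hmk _ _ h)
  have hsub : ∀ k : ℕ, ∀ τ, L τ → L ((1 - ζ^k) * τ) := by
    intro k τ h; rw [sub_mul, one_mul, sub_eq_add_neg]; exact ha _ _ h (hneg _ (hmk _ _ h))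
  by_contra hne
  have h57 : n = 5 ∨ 7 ≤ n := by omega
  rcases h57 with rfl | h7
  · have h5 : ζ^5 = 1 := hζ.pow_eq_one
    have hz : ζ ≠ 1 := hζ.ne_one (by norm_num)
    have h4 : ζ^4 + ζ^3 + ζ^2 + ζ + 1 = 0 := by
      have : (ζ - 1) * (ζ^4 + ζ^3 + ζ^2 + ζ + 1) = 0 := by linear_combination h5
      exact (mul_eq_zero.1 this).resolve_left (sub_ne_zero.2 hz)
    have hzz : ζ ≠ 0 := by rintro rfl; simp at hz1
    have hc : starRingEnd ℂ ζ * ζ = 1 := by rw [Complex.conj_mul', hz1]; simp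
    have hy : (ζ + starRingEnd ℂ ζ)^2 + (ζ + starRingEnd ℂ ζ) - 1 = 0 := by
      have h2 : ζ^2 * ((ζ + starRingEnd ℂ ζ)^2 + (ζ + starRingEnd ℂ ζ) - 1) = 0 := by
        linear_combination h4 + (2 * ζ^2 + starRingEnd ℂ ζ * ζ + 1 + ζ) * hc
      exact (mul_eq_zero.1 h2).resolve_left (by simpa using hzz)
    rw [Complex.add_conj] at hy
    have hy' : (2 * ζ.re)^2 + 2 * ζ.re - 1 = 0 := by exact_mod_cast hy
    have hprod : (1 + ζ) * (1 + ζ^2) ≠ 0 := by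
      have : (1 + ζ) * (1 + ζ^2) = - ζ^4 := by linear_combination h4
      rw [this]; simpa using hzz
    have n1 := normsq_add ζ hz1
    have n2 := normsq_add (ζ^2) (by simp [hz1])
    have hre : (ζ^2).re = 2 * ζ.re^2 - 1 := by
      have h2 : ζ.re^2 + ζ.im^2 = 1 := by
        have := Complex.sq_norm ζ
        rw [hz1, Complex.normSq_apply] at this; linarith
      rw [pow_two, Complex.mul_re]; linarith
    rcases lt_or_ge ζ.re 0 with h | h
    · refine no_contract L hL (1 + ζ^1) (by simpa using left_ne_zero_of_mul hprod) ?_ (hadd 1) τ hτ hτ0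
      rw [pow_one]
      have : ‖1 + ζ‖^2 < 1 := by rw [n1]; nlinarith
      nlinarith [norm_nonneg (1 + ζ)]
    · refine no_contract L hL (1 + ζ^2) (right_ne_zero_of_mul hprod) ?_ (hadd 2) τ hτ hτ0
      have hpos : 0 < ζ.re := by
        rcases h.lt_or_eq with h | h
        · exact h
        · rw [← h] at hy'; norm_num at hy'
      have : ‖1 + ζ^2‖^2 < 1 := by rw [n2, hre]; nlinarith
      nlinarith [norm_nonneg (1 + ζ^2)]
  · have hE := Complex.isPrimitiveRoot_exp n (by omega)
    have : NeZero n := ⟨by omega⟩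
    obtain ⟨k, -, hk⟩ := hζ.eq_pow_of_pow_eq_one hE.pow_eq_one
    refine no_contract L hL (1 - ζ^k) ?_ ?_ (hsub k) τ hτ hτ0
    · rw [hk, sub_ne_zero]; exact (hE.ne_one (by omega)).symm
    · rw [hk, norm_sub_rev]
      have h1 := Real.norm_exp_I_mul_ofReal_sub_one_le (x := 2 * π / n)
      have h2 : Complex.I * ((2 * π / n : ℝ) : ℂ) = 2 * π * Complex.I / n := by push_cast; ring
      rw [h2] at h1
      refine h1.trans_lt ?_
      rw [Real.norm_of_nonneg (by positivity), div_lt_one (by positivity)]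
      have : (7:ℝ) ≤ n := by exact_mod_cast h7
      linarith [Real.pi_lt_d2]
lemma t4_bound : (Real.sqrt (6 + 2 * Real.sqrt 3) - Real.sqrt 3) / (3 - Real.sqrt 3) ≤ 1.0605 := by
  have h3 : Real.sqrt 3 ^ 2 = 3 := Real.sq_sqrt (by norm_num)
  have hl : 1.732 < Real.sqrt 3 := Real.lt_sqrt_of_sq_lt (by norm_num)
  have hu : Real.sqrt 3 < 1.7321 := (Real.sqrt_lt' (by norm_num)).2 (by norm_num)
  rw [div_le_iff₀ (by linarith), sub_le_iff_le_add]
  apply Real.sqrt_le_iff.2 ⟨by linarith, by nlinarith⟩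

lemma t3_bound : (2 * Real.sqrt (8 + 2 * Real.sqrt 5) - (1 + Real.sqrt 5)) / (6 - Real.sqrt 5) ≤ 1.018 := by
  have h3 : Real.sqrt 5 ^ 2 = 5 := Real.sq_sqrt (by norm_num)
  have hl : 2.236 < Real.sqrt 5 := Real.lt_sqrt_of_sq_lt (by norm_num)
  have hu : Real.sqrt 5 < 2.2361 := (Real.sqrt_lt' (by norm_num)).2 (by norm_num)
  rw [div_le_iff₀ (by linarith)]
  have : Real.sqrt (8 + 2 * Real.sqrt 5) ≤ (7.108 - 0.018 * Real.sqrt 5) / 2 :=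
    Real.sqrt_le_iff.2 ⟨by linarith, by nlinarith⟩
  linarith

lemma core (Γ : Subgroup SL2C) (hd : SeqDisc Γ) (A B : SL2C) (hAΓ : A ∈ Γ) (hBΓ : B ∈ Γ)
    (a p : ℂ) (hp : p ≠ 0) (n : ℕ) (hn : 3 ≤ n) (hζ : IsPrimitiveRoot (a^2) n)
    (hA : A.1 = !![a, 0; 0, a⁻¹]) (hB : B.1 = !![p, 1; -1, 0]) (C : SL2C) :
    2 * tOf n ≤ max (fnorm ((C * A * C⁻¹ : SL2C) : Matrix (Fin 2) (Fin 2) ℂ) ^ 2)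
      (fnorm ((C * B * C⁻¹ : SL2C) : Matrix (Fin 2) (Fin 2) ℂ) ^ 2) := by
  have hz1 : ‖a^2‖ = 1 := hζ.norm'_eq_one (by omega)
  have ha1 : ‖a‖ = 1 := by
    rw [norm_pow] at hz1
    exact (pow_eq_one_iff_of_nonneg (norm_nonneg _) (by norm_num)).1 hz1
  have ha0 : a ≠ 0 := by rintro rfl; simp at ha1
  have hzne : a^2 ≠ 1 := hζ.ne_one (by omega)
  have hAinv : (A⁻¹ : SL2C).1 = !![a⁻¹, 0; 0, a] := by rw [inv_two, hA]; simp
  have hBinv : (B⁻¹ : SL2C).1 = !![0, -1; 1, p] := by rw [inv_two, hB]; simp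
  -- translations
  have hT0 : Tr ((1 - a^2) * p) ∈ Γ := by
    have : Tr ((1 - a^2) * p) = A * (B * A * B⁻¹) := by
      apply Subtype.ext
      simp only [Matrix.SpecialLinearGroup.coe_mul]
      erw [hA, hB, hBinv]
      simp only [Tr, Matrix.mul_fin_two]
      ext i j
      fin_cases i <;> fin_cases j <;> simp <;> field_simp <;> ring
    rw [this]
    exact Γ.mul_mem hAΓ (Γ.mul_mem (Γ.mul_mem hBΓ hAΓ) (Γ.inv_mem hBΓ))
  have hTadd : ∀ τ σ, Tr τ ∈ Γ → Tr σ ∈ Γ → Tr (τ + σ) ∈ Γ := by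
    intro τ σ h1 h2
    have : Tr (τ + σ) = Tr τ * Tr σ := by
      apply Subtype.ext
      simp only [Matrix.SpecialLinearGroup.coe_mul]
      simp [Tr, add_comm]
    rw [this]; exact Γ.mul_mem h1 h2
  have hTneg : ∀ τ, Tr τ ∈ Γ → Tr (-τ) ∈ Γ := by
    intro τ h1
    have : Tr (-τ) = (Tr τ)⁻¹ := by
      apply Subtype.ext
      rw [inv_two]; simp [Tr]
    rw [this]; exact Γ.inv_mem h1
  have hTm : ∀ τ, Tr τ ∈ Γ → Tr (a^2 * τ) ∈ Γ := by
    intro τ h1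
    have : Tr (a^2 * τ) = A * Tr τ * A⁻¹ := by
      apply Subtype.ext
      rw [conj_Tr]
      erw [hA]
      simp [Tr]
    rw [this]; exact Γ.mul_mem (Γ.mul_mem hAΓ h1) (Γ.inv_mem hAΓ)
  have hτ0 : (1 - a^2) * p ≠ 0 := mul_ne_zero (sub_ne_zero.2 hzne.symm) hp
  have hS1 : ∀ τ, Tr τ ∈ Γ → τ ≠ 0 → 1 ≤ ‖τ‖ := by
    intro τ h1 h2
    have := shimizu Γ hd τ h2 h1 B hBΓ (by rw [hB]; simp)
    rw [hB] at this; simpa using this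
  have hS2 : 1 ≤ ‖p‖ * ‖(1 - a^2) * p‖ := by
    have e : (B * B).1 1 0 = -p := by
      simp only [Matrix.SpecialLinearGroup.coe_mul]
      erw [hB]; simp
    have := shimizu Γ hd _ hτ0 hT0 (B * B) (Γ.mul_mem hBΓ hBΓ) (by rw [e]; simpa using hp)
    rw [e, norm_mul, norm_neg] at this
    exact this
  have hcr := crystal n hn (a^2) hζ (fun τ => Tr τ ∈ Γ) hS1 hTadd hTneg hTm _ hT0 hτ0
  have hS3 : 1 ≤ ‖p‖^4 * ‖1 - a^2‖^2 := by
    rw [norm_mul] at hS2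
    have : 1 ≤ (‖p‖ * (‖1 - a^2‖ * ‖p‖))^2 := one_le_pow₀ hS2
    calc (1:ℝ) ≤ _ := this
      _ = _ := by ring
  obtain ⟨h1, h2, h, h1p, hh, H⟩ := conj_fnorm C
  have nA := norm_A A a ha1 hA h1 h2 h hh _ (H A)
  have nB := norm_B B p hB h1 h2 h h1p hh _ (H B)
  rw [nA, nB]
  have iB := ineq_B p h h1⁻¹ ‖p‖
  rw [inv_inv] at iB
  have hiB := fun κ l => iB κ l (by positivity) (norm_nonneg _) le_rfl
  clear iB nA nB H hh
  generalize ‖p - h * (h1⁻¹ : ℝ)‖^2 + ‖h‖^2 * h1⁻¹^2 + h1⁻¹^2 +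
      ‖1 - h * (h1⁻¹ : ℝ) * (p - h * (h1⁻¹ : ℝ))‖^2 * h1^2 = E at hiB ⊢
  have hre := re_of_quad (a^2) hz1
  have hns := normsq_sub (a^2) hz1
  have hp2 : 0 ≤ ‖p‖^2 := by positivity
  have hp4 : ‖p‖^4 = (‖p‖^2)^2 := by ring
  rw [hp4] at hS3
  generalize a^2 = ζ at *
  by_contra hlt
  rw [not_le, max_lt_iff] at hlt
  obtain ⟨hlA, hlB⟩ := hlt
  have he0 : 0 ≤ ‖h‖^2 := by positivity
  generalize ‖h‖^2 = e at *
  generalize ‖p‖^2 = q at *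
  rcases hcr with rfl | rfl | rfl
  · have h3 : ζ^3 = 1 := hζ.pow_eq_one
    have hq : ζ^2 + 1 = ((-1 : ℝ) : ℂ) * ζ := by
      have : (ζ - 1) * (ζ^2 + 1 + ζ) = 0 := by linear_combination h3
      have := (mul_eq_zero.1 this).resolve_left (sub_ne_zero.2 hzne)
      push_cast; linear_combination this
    have hT : tOf 3 ≤ 1.018 := t3_bound
    rw [hns, hre _ hq] at hS3 hlA
    have := hiB 0.94 0.3 (by norm_num) (by norm_num) (by nlinarith)
    nlinarith
  · have h3 : ζ^4 = 1 := hζ.pow_eq_one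
    have h2 : ζ^2 ≠ 1 := hζ.pow_ne_one_of_pos_of_lt (by norm_num) (by norm_num)
    have hq : ζ^2 + 1 = ((0 : ℝ) : ℂ) * ζ := by
      have : (ζ^2 - 1) * (ζ^2 + 1) = 0 := by linear_combination h3
      have := (mul_eq_zero.1 this).resolve_left (sub_ne_zero.2 h2)
      push_cast; linear_combination this
    have hT : tOf 4 ≤ 1.0605 := t4_bound
    rw [hns, hre _ hq] at hS3 hlA
    have := hiB 0.92 0.4 (by norm_num) (by norm_num) (by nlinarith)
    nlinarith
  · have h3 : ζ^6 = 1 := hζ.pow_eq_one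
    have h2 : ζ^2 ≠ 1 := hζ.pow_ne_one_of_pos_of_lt (by norm_num) (by norm_num)
    have h3' : ζ^3 ≠ 1 := hζ.pow_ne_one_of_pos_of_lt (by norm_num) (by norm_num)
    have hq : ζ^2 + 1 = ((1 : ℝ) : ℂ) * ζ := by
      have h6 : (ζ^3 - 1) * ((ζ + 1) * (ζ^2 + 1 - ζ)) = 0 := by linear_combination h3
      have h7 := (mul_eq_zero.1 h6).resolve_left (sub_ne_zero.2 h3')
      have h8 : ζ + 1 ≠ 0 := fun h => h2 (by linear_combination (ζ - 1) * h)
      have := (mul_eq_zero.1 h7).resolve_left h8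
      push_cast; linear_combination this
    have hT : tOf 6 = 17 / 16 := rfl
    rw [hT] at hlA hlB
    rw [hns, hre _ hq] at hS3 hlA
    have := hiB (7/8) (3/8) (by norm_num) (by norm_num) (by nlinarith)
    nlinarith

lemma dihedral_iso {G : Type*} [Group G] (x y : G) (n : ℕ) (hn : 3 ≤ n) (hx : orderOf x = n)
    (hy : y * y = 1) (hxy : x * y * x = y) :
    Nonempty (Subgroup.closure {x, y} ≃* DihedralGroup n) := by
  have : NeZero n := ⟨by omega⟩
  have : Fact (1 < n) := ⟨by omega⟩
  set φ : ZMod n → G := fun i => x ^ i.val with hφ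
  have h0 : φ 0 = 1 := by simp [hφ]
  have hadd : ∀ i j, φ (i + j) = φ i * φ j := by
    intro i j
    simp only [hφ, ZMod.val_add, ← pow_add]
    generalize i.val + j.val = m
    rw [← hx, pow_mod_orderOf]
  have hneg : ∀ i, φ (-i) = (φ i)⁻¹ := by
    intro i
    apply eq_inv_of_mul_eq_one_left
    rw [← hadd]; simp [h0]
  have hpow : ∀ k : ℕ, x^k * y * x^k = y := by
    intro k
    induction k with
    | zero => simp
    | succ k ih =>
      calc x^(k+1) * y * x^(k+1) = x^k * (x * y * x) * x^k := by
            rw [pow_succ]; nth_rewrite 2 [← pow_succ]; rw [pow_succ']; simp only [mul_assoc]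
        _ = y := by rw [hxy, ih]
  have hcomm : ∀ i, φ i * y = y * φ (-i) := by
    intro i
    rw [hneg, eq_mul_inv_iff_mul_eq]
    exact hpow _
  let f : DihedralGroup n →* G := MonoidHom.mk' (fun d => match d with
    | .r i => φ i
    | .sr i => y * φ i) (by
      rintro (i | i) (j | j)
      · exact hadd i j
      · change y * φ (j - i) = φ i * (y * φ j)
        rw [← mul_assoc, hcomm, mul_assoc, ← hadd, sub_eq_add_neg, add_comm]
      · change y * φ (i + j) = y * φ i * φ j
        rw [hadd, mul_assoc]
      · change φ (j - i) = y * φ i * (y * φ j)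
        rw [mul_assoc, ← mul_assoc (φ i), hcomm, mul_assoc, ← hadd, ← mul_assoc, hy, one_mul,
          sub_eq_add_neg, add_comm])
  have fr : ∀ i, f (.r i) = φ i := fun i => rfl
  have fsr : ∀ i, f (.sr i) = y * φ i := fun i => rfl
  have hinj : Function.Injective f := by
    rw [injective_iff_map_eq_one]
    rintro (i | i) hi
    · rw [fr] at hi
      have h1 : n ∣ i.val := by
        have h1 := orderOf_dvd_of_pow_eq_one (show x ^ i.val = 1 from hi)
        generalize i.val = v at *
        rwa [hx] at h1
      have h2 : i.val = 0 := Nat.eq_zero_of_dvd_of_lt h1 (ZMod.val_lt i)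
      rw [(ZMod.val_eq_zero i).1 h2]; rfl
    · exfalso
      rw [fsr] at hi
      have hc : y * x = x * y := by
        rw [eq_inv_of_mul_eq_one_left hi]
        exact ((Commute.refl x).pow_left _).inv_left
      have h2 : x^2 = 1 := by
        rw [← hc, mul_assoc] at hxy
        rw [pow_two]
        exact mul_eq_left.1 hxy
      have := orderOf_le_of_pow_eq_one (by norm_num) h2
      omega
  have hrange : f.range = Subgroup.closure {x, y} := by
    apply le_antisymm
    · have hxm : x ∈ Subgroup.closure {x, y} := Subgroup.subset_closure (by simp)
      have hym : y ∈ Subgroup.closure {x, y} := Subgroup.subset_closure (by simp)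
      rintro _ ⟨(i | i), rfl⟩
      · exact Subgroup.pow_mem _ hxm _
      · exact Subgroup.mul_mem _ hym (Subgroup.pow_mem _ hxm _)
    · rw [Subgroup.closure_le]
      rintro z (rfl | rfl)
      · exact ⟨.r 1, by rw [fr]; simp [hφ, ZMod.val_one]⟩
      · exact ⟨.sr 0, by rw [fsr, h0, mul_one]⟩
  exact ⟨((MonoidHom.ofInjective hinj).trans (MulEquiv.subgroupCongr hrange)).symm⟩

lemma mem_center_SL (x : SL2C) : x ∈ Subgroup.center SL2C ↔ x = 1 ∨ x = -1 := by
  rw [Matrix.SpecialLinearGroup.mem_center_iff]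
  constructor
  · rintro ⟨r, hr, h⟩
    simp at hr
    rcases hr with rfl | rfl
    · left; apply Subtype.ext; rw [← h]; simp
    · right; apply Subtype.ext; rw [← h]; ext i j; fin_cases i <;> fin_cases j <;> simp
  · rintro (rfl | rfl)
    · exact ⟨1, by simp, by simp⟩
    · exact ⟨-1, by simp, by ext i j; fin_cases i <;> fin_cases j <;> simp⟩

lemma psl_dihedral (A B : SL2C) (n : ℕ) (hn : 3 ≤ n) (hA : IsEllipticOfOrder A n)
    (hB : B * B = -1) (hAB : A * B * A = B) :
    Nonempty (↥(pslImage (Subgroup.closure {A, B})) ≃* DihedralGroup n) := by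
  unfold pslImage
  rw [MonoidHom.map_closure, Set.image_pair]
  apply dihedral_iso _ _ n hn
  · rw [orderOf_eq_iff (by omega)]
    have key : ∀ m : ℕ, (QuotientGroup.mk' (Subgroup.center SL2C) A) ^ m = 1 ↔
        (A ^ m = 1 ∨ A ^ m = -1) := by
      intro m
      rw [← map_pow, QuotientGroup.mk'_apply, QuotientGroup.eq_one_iff, mem_center_SL]
    refine ⟨(key n).2 hA.1, fun m hm hm0 h => ?_⟩
    have := hA.2 m hm0 hm
    have := (key m).1 h
    tauto
  · rw [← map_mul, QuotientGroup.mk'_apply, QuotientGroup.eq_one_iff, mem_center_SL]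
    exact Or.inr hB
  · rw [← map_mul, ← map_mul, hAB]
def mkSL (a b c d : ℂ) (h : a * d - b * c = 1) : SL2C := ⟨!![a, b; c, d], by rw [det_fin_two_of, h]⟩

lemma conj_mkSL (a b c d : ℂ) (h : a * d - b * c = 1) (X : SL2C) (x y z w : ℂ)
    (hX : X.1 = !![x, y; z, w]) : (mkSL a b c d h * X * (mkSL a b c d h)⁻¹).1 =
      !![a, b; c, d] * !![x, y; z, w] * !![d, -b; -c, a] := by
  rw [Matrix.SpecialLinearGroup.coe_mul, Matrix.SpecialLinearGroup.coe_mul, inv_two, hX]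
  rfl

lemma exists_tri (A : SL2C) : ∃ (P : SL2C) (a y : ℂ), a ≠ 0 ∧
    (P * A * P⁻¹ : SL2C).1 = !![a, y; 0, a⁻¹] := by
  have hdet : A.1 0 0 * A.1 1 1 - A.1 0 1 * A.1 1 0 = 1 := by
    have := A.2; rwa [det_fin_two] at this
  have hA : A.1 = !![A.1 0 0, A.1 0 1; A.1 1 0, A.1 1 1] := Matrix.eta_fin_two _
  generalize A.1 0 0 = x at *
  generalize A.1 0 1 = y at *
  generalize A.1 1 0 = z at *
  generalize A.1 1 1 = w at *
  by_cases hz : z = 0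
  · subst hz
    have hxw : x * w = 1 := by linear_combination hdet
    refine ⟨1, x, y, left_ne_zero_of_mul_eq_one hxw, ?_⟩
    rw [one_mul, inv_one, mul_one, hA, eq_inv_of_mul_eq_one_right hxw]
  · obtain ⟨s, hs⟩ := IsAlgClosed.exists_pow_nat_eq ((x + w)^2 - 4) (n := 2) (by norm_num)
    obtain ⟨a, ha⟩ : ∃ a, a = (x + w + s) / 2 := ⟨_, rfl⟩
    have hq : a * (x + w - a) = 1 := by rw [ha]; linear_combination (-1/4) * hs
    refine ⟨mkSL (0) (1/z) (-z) (a - w) (by simp [hz]), a, -1/z, left_ne_zero_of_mul_eq_one hq, ?_⟩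
    · rw [conj_mkSL _ _ _ _ _ _ _ _ _ _ hA, ← eq_inv_of_mul_eq_one_right hq]
      simp only [Matrix.mul_fin_two]
      ext i j
      fin_cases i <;> fin_cases j <;> simp <;> field_simp <;>
        first | ring1 | linear_combination hdet | linear_combination hdet + hq | linear_combination hq - hdet | linear_combination hdet - hq | linear_combination z * hdet - z * hq | linear_combination z * hq - z * hdet

lemma tri_pow (a y : ℂ) (ha : a * a = 1) (X : SL2C) (hX : X.1 = !![a, y; 0, a]) (k : ℕ) :
    (X^k).1 = !![a^k, k * (a^(k+1) * y); 0, a^k] := by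
  induction k with
  | zero => ext i j; fin_cases i <;> fin_cases j <;> simp
  | succ k ih =>
    rw [pow_succ, Matrix.SpecialLinearGroup.coe_mul, ih, hX, Matrix.mul_fin_two]
    ext i j
    fin_cases i <;> fin_cases j <;> simp <;>
      first | ring1 | linear_combination (- a^k * y) * ha

lemma conj_pow_pm (P A : SL2C) (k : ℕ) : ((P * A * P⁻¹)^k = 1 ∨ (P * A * P⁻¹)^k = -1) ↔
    (A^k = 1 ∨ A^k = -1) := by
  rw [conj_pow]
  constructor
  · rintro (h | h)
    · left; exact conj_eq_one_iff.1 h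
    · right
      have : A^k = P⁻¹ * (P * A^k * P⁻¹) * P := by group
      rw [this, h]; simp
  · rintro (h | h)
    · left; rw [h]; simp
    · right; rw [h]; simp

lemma exists_diag (A : SL2C) (n : ℕ) (hn : 3 ≤ n) (hA : IsEllipticOfOrder A n) :
    ∃ (P : SL2C) (a : ℂ), a ≠ 0 ∧ (P * A * P⁻¹ : SL2C).1 = !![a, 0; 0, a⁻¹] := by
  obtain ⟨P, a, y, ha0, hP⟩ := exists_tri A
  by_cases ha : a * a = 1
  · have hinv : a⁻¹ = a := (eq_inv_of_mul_eq_one_left ha).symm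
    rw [hinv] at hP
    have h1 := tri_pow a y ha _ hP n
    have h2 := (conj_pow_pm P A n).2 hA.1
    have h3 : ((P * A * P⁻¹)^n).1 0 1 = 0 := by
      rcases h2 with h | h <;> rw [h] <;> simp
    rw [h1] at h3
    have hn0 : n ≠ 0 := by omega
    have hy : y = 0 := by simpa [hn0, ha0] using h3
    exact ⟨P, a, ha0, by rw [hP, hy, hinv]⟩
  · have hne : a ^ 2 - 1 ≠ 0 := by rw [pow_two]; exact sub_ne_zero.2 ha
    refine ⟨mkSL (1) (y * a / (a ^ 2 - 1)) (0) (1) (by simp) * P, a, ha0, ?_⟩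
    have : ∀ Q : SL2C, Q * P * A * (Q * P)⁻¹ = Q * (P * A * P⁻¹) * Q⁻¹ := by intro Q; group
    rw [this, conj_mkSL _ _ _ _ _ _ _ _ _ _ hP]
    simp only [Matrix.mul_fin_two]
    ext i j
    fin_cases i <;> fin_cases j <;> simp <;> field_simp <;> ring1

lemma diag_pow (a : ℂ) (X : SL2C) (hX : X.1 = !![a, 0; 0, a⁻¹]) (k : ℕ) :
    (X^k).1 = !![a^k, 0; 0, (a⁻¹)^k] := by
  induction k with
  | zero => ext i j; fin_cases i <;> fin_cases j <;> simp
  | succ k ih =>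
    rw [pow_succ, Matrix.SpecialLinearGroup.coe_mul, ih, hX, Matrix.mul_fin_two]
    ext i j
    fin_cases i <;> fin_cases j <;> simp [pow_succ]

lemma primitive (A P : SL2C) (n : ℕ) (hn : 3 ≤ n) (hA : IsEllipticOfOrder A n) (a : ℂ)
    (hP : (P * A * P⁻¹ : SL2C).1 = !![a, 0; 0, a⁻¹]) : IsPrimitiveRoot (a^2) n := by
  have key : ∀ k : ℕ, (a^2)^k = 1 ↔ (A^k = 1 ∨ A^k = -1) := by
    intro k
    rw [← conj_pow_pm P]
    have hd := diag_pow a _ hP k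
    have e : (a^2)^k = a^k * a^k := by ring
    rw [e]
    constructor
    · intro h
      rcases mul_self_eq_one_iff.1 h with h | h
      · left; apply Subtype.ext; rw [hd, inv_pow, h]
        ext i j; fin_cases i <;> fin_cases j <;> simp
      · right; apply Subtype.ext; rw [hd, inv_pow, h]
        ext i j; fin_cases i <;> fin_cases j <;> simp
    · rintro (h | h)
      · have h0 : ((P * A * P⁻¹)^k).1 0 0 = 1 := by rw [h]; simp
        rw [hd] at h0
        have : a^k = 1 := by simpa using h0
        rw [this]; simp
      · have h0 : ((P * A * P⁻¹)^k).1 0 0 = -1 := by rw [h]; simp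
        rw [hd] at h0
        have : a^k = -1 := by simpa using h0
        rw [this]; simp
  refine IsPrimitiveRoot.mk_of_lt _ (by omega) ((key n).2 hA.1) ?_
  intro l hl hln h
  have := hA.2 l hl hln
  have := (key l).1 h
  tauto

lemma normal_form (A B : SL2C) (n : ℕ) (hn : 3 ≤ n) (hA : IsEllipticOfOrder A n)
    (hγ : γp A B = βp A) : ∃ (P : SL2C) (a p : ℂ), a ≠ 0 ∧
      (P * A * P⁻¹ : SL2C).1 = !![a, 0; 0, a⁻¹] ∧ (P * B * P⁻¹ : SL2C).1 = !![p, 1; -1, 0] := by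
  obtain ⟨P, a, ha0, hP⟩ := exists_diag A n hn hA
  have hprim := primitive A P n hn hA a hP
  have hzne : a^2 ≠ 1 := hprim.ne_one (by omega)
  have htr : ∀ X : SL2C, trace (P * X * P⁻¹ : SL2C).1 = trace X.1 := by
    intro X
    rw [Matrix.SpecialLinearGroup.coe_mul, Matrix.trace_mul_comm, ← Matrix.SpecialLinearGroup.coe_mul]
    simp
  have hβ : βp A = (a - a⁻¹)^2 := by
    unfold βp
    rw [← htr, hP, trace_fin_two_of]; field_simp; ring
  have hdet : (P * B * P⁻¹).1 0 0 * (P * B * P⁻¹).1 1 1 - (P * B * P⁻¹).1 0 1 * (P * B * P⁻¹).1 1 0 = 1 := by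
    have := (P * B * P⁻¹).2; rwa [det_fin_two] at this
  have hB : (P * B * P⁻¹).1 = !![(P * B * P⁻¹).1 0 0, (P * B * P⁻¹).1 0 1; (P * B * P⁻¹).1 1 0, (P * B * P⁻¹).1 1 1] := Matrix.eta_fin_two _
  have hg : γp A B = trace ((P * A * P⁻¹) * (P * B * P⁻¹) * (P * A * P⁻¹)⁻¹ * (P * B * P⁻¹)⁻¹ : SL2C).1 - 2 := by
    unfold γp
    have e : (P * A * P⁻¹) * (P * B * P⁻¹) * (P * A * P⁻¹)⁻¹ * (P * B * P⁻¹)⁻¹ =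
        P * (A * B * A⁻¹ * B⁻¹) * P⁻¹ := by group
    rw [e, htr]
  simp only [Matrix.SpecialLinearGroup.coe_mul _ (P * B * P⁻¹)⁻¹, Matrix.SpecialLinearGroup.coe_mul _ (P * A * P⁻¹)⁻¹, Matrix.SpecialLinearGroup.coe_mul (P * A * P⁻¹) (P * B * P⁻¹), inv_two (P * B * P⁻¹), inv_two (P * A * P⁻¹), hP] at hg
  have hconj : ∀ Q X : SL2C, Q * P * X * (Q * P)⁻¹ = Q * (P * X * P⁻¹) * Q⁻¹ := by intro Q X; group
  have hcA := fun Q : SL2C => hconj Q A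
  have hcB := fun Q : SL2C => hconj Q B
  clear htr hconj
  generalize P * B * P⁻¹ = B' at *
  generalize P * A * P⁻¹ = A' at *
  generalize B'.1 0 0 = p at *
  generalize B'.1 0 1 = q at *
  generalize B'.1 1 0 = r at *
  generalize B'.1 1 1 = s at *
  rw [hB] at hg
  simp [Matrix.mul_fin_two, trace_fin_two_of] at hg
  rw [hg, hβ] at hγ
  have ha2 : (a - a⁻¹)^2 ≠ 0 := by
    apply pow_ne_zero
    intro h
    apply hzne
    field_simp at h
    linear_combination h
  have hqr : q * r = -1 := by
    have : (a - a⁻¹)^2 * (q * r + 1) = 0 := by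
      have haa : a * a⁻¹ = 1 := mul_inv_cancel₀ ha0
      generalize a⁻¹ = b at *
      linear_combination (-1) * hγ + 2 * a * b * hdet + 2 * haa
    exact eq_neg_of_add_eq_zero_left ((mul_eq_zero.1 this).resolve_left ha2)
  have hps : p * s = 0 := by linear_combination hdet + hqr
  have hq0 : q ≠ 0 := by rintro rfl; simp at hqr
  have hr0 : r ≠ 0 := by rintro rfl; simp at hqr
  rcases mul_eq_zero.1 hps with h0 | h0
  · obtain ⟨l, hl⟩ := IsAlgClosed.exists_pow_nat_eq q (n := 2) (by norm_num)
    have hl0 : l ≠ 0 := by rintro rfl; simp at hl; exact hq0 hl.symm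
    refine ⟨mkSL (0) (l) (-l⁻¹) (0) (by simp [hl0]) * P, a⁻¹, s, inv_ne_zero ha0, ?_, ?_⟩
    · rw [hcA, conj_mkSL _ _ _ _ _ _ _ _ _ _ hP]
      simp only [Matrix.mul_fin_two]
      ext i j
      fin_cases i <;> fin_cases j <;> simp [hl0] <;> field_simp
    · rw [hcB, conj_mkSL _ _ _ _ _ _ _ _ _ _ hB]
      simp only [Matrix.mul_fin_two, h0]
      ext i j
      fin_cases i <;> fin_cases j <;> simp [hl0] <;> field_simp <;>
        first | linear_combination hl | linear_combination -hl | linear_combination -hqr - r * hl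
  · obtain ⟨l, hl⟩ := IsAlgClosed.exists_pow_nat_eq (-r) (n := 2) (by norm_num)
    have hl0 : l ≠ 0 := by rintro rfl; simp at hl; exact hr0 hl
    refine ⟨mkSL (l) (0) (0) (l⁻¹) (by simp [hl0]) * P, a, p, ha0, ?_, ?_⟩
    · rw [hcA, conj_mkSL _ _ _ _ _ _ _ _ _ _ hP]
      simp only [Matrix.mul_fin_two]
      ext i j
      fin_cases i <;> fin_cases j <;> simp [hl0] <;> field_simp
    · rw [hcB, conj_mkSL _ _ _ _ _ _ _ _ _ _ hB]
      simp only [Matrix.mul_fin_two, h0]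
      ext i j
      fin_cases i <;> fin_cases j <;> simp [hl0] <;> field_simp <;>
        first | linear_combination hl | linear_combination -hl | linear_combination q * hl - hqr

/-- Theorem 5.2: displacement bound when `γ(A,B) = β(A)` and the group is not dihedral. -/
theorem margulis_parabolic_commutator_case (A B : SL2C) (n : ℕ) (hn : 3 ≤ n)
    (hd : IsDiscreteSubgroup (Subgroup.closure {A, B}))
    (hnd : ¬ ∃ m : ℕ, Nonempty (↥(pslImage (Subgroup.closure {A, B})) ≃* DihedralGroup m))
    (hA : IsEllipticOfOrder A n)
    (hγ : γp A B = βp A) :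
    ∀ C : SL2C,
      max (fnorm ((C * A * C⁻¹ : SL2C) : Matrix (Fin 2) (Fin 2) ℂ) ^ 2)
      (fnorm ((C * B * C⁻¹ : SL2C) : Matrix (Fin 2) (Fin 2) ℂ) ^ 2) ≥ 2 * tOf n := by
  intro C
  obtain ⟨P, a, p, ha0, hPA, hPB⟩ := normal_form A B n hn hA hγ
  have hprim := primitive A P n hn hA a hPA
  have hp : p ≠ 0 := by
    rintro rfl
    apply hnd
    refine ⟨n, psl_dihedral A B n hn hA ?_ ?_⟩
    · have h1 : (P * B * P⁻¹) * (P * B * P⁻¹) = -1 := by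
        apply Subtype.ext
        rw [Matrix.SpecialLinearGroup.coe_mul, hPB, Matrix.mul_fin_two]
        ext i j
        fin_cases i <;> fin_cases j <;> simp
      have h2 : B * B = P⁻¹ * ((P * B * P⁻¹) * (P * B * P⁻¹)) * P := by group
      rw [h2, h1]; simp
    · have h1 : (P * A * P⁻¹) * (P * B * P⁻¹) * (P * A * P⁻¹) = P * B * P⁻¹ := by
        apply Subtype.ext
        rw [Matrix.SpecialLinearGroup.coe_mul, Matrix.SpecialLinearGroup.coe_mul, hPB, hPA]
        simp only [Matrix.mul_fin_two]
        ext i j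
        fin_cases i <;> fin_cases j <;> simp [ha0]
      have h2 : A * B * A = P⁻¹ * ((P * A * P⁻¹) * (P * B * P⁻¹) * (P * A * P⁻¹)) * P := by group
      rw [h2, h1]; group
  have hmem : ∀ X ∈ Subgroup.closure {A, B}, P * X * P⁻¹ ∈
      (Subgroup.closure {A, B}).map (MulAut.conj P).toMonoidHom := fun X hX => ⟨X, hX, rfl⟩
  have h := core _ (seqDisc_conj _ (seqDisc_of_discrete _ hd) P) (P * A * P⁻¹) (P * B * P⁻¹)
    (hmem A (Subgroup.subset_closure (by simp))) (hmem B (Subgroup.subset_closure (by simp)))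
    a p hp n hn hprim hPA hPB (C * P⁻¹)
  have hX : ∀ X : SL2C, C * P⁻¹ * (P * X * P⁻¹) * (C * P⁻¹)⁻¹ = C * X * C⁻¹ := by
    intro X; group
  rw [hX, hX] at h
  exact h

end
end

section
/- Let A, B ∈ SL(2,ℂ) with A ≠ ±1 and B ≠ ±1, and suppose A and B have no common eigenvector in ℂ² (i.e., the corresponding Möbius transformations have disjoint fixed point sets). Then there exists F ∈ SL(2,ℂ) with tr F = 0 such that γ(F,B) = β(B) − γ(A,B), and such that if the subgroup generated by A and B is discrete then the subgroup generated by F and B is discrete. -/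
open Matrix Real

noncomputable section

theorem aux_ker (N : Matrix (Fin 2) (Fin 2) ℂ) (hN : N ≠ 0) (v w : Fin 2 → ℂ) (hv : v ≠ 0)
    (h1 : N.mulVec v = 0) (h2 : N.mulVec w = 0) : ∃ a : ℂ, w = a • v := by
  have e0 := congrFun h1 0
  have e1 := congrFun h1 1
  have f0 := congrFun h2 0
  have f1 := congrFun h2 1
  simp only [Matrix.mulVec, dotProduct, Fin.sum_univ_two, Pi.zero_apply] at e0 e1 f0 f1
  have key : v 0 * w 1 = v 1 * w 0 := by
    by_contra hne
    have hd : v 0 * w 1 - v 1 * w 0 ≠ 0 := sub_ne_zero.mpr hne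
    apply hN
    ext i j
    fin_cases i <;> fin_cases j <;> simp <;> apply mul_right_cancel₀ hd
    · linear_combination w 1 * e0 - v 1 * f0
    · linear_combination v 0 * f0 - w 0 * e0
    · linear_combination w 1 * e1 - v 1 * f1
    · linear_combination v 0 * f1 - w 0 * e1
  by_cases hv0 : v 0 = 0
  · have hv1 : v 1 ≠ 0 := by
      intro h
      apply hv
      ext i
      fin_cases i <;> simp [hv0, h]
    refine ⟨w 1 / v 1, ?_⟩
    ext i
    fin_cases i
    · simp only [hv0, zero_mul] at key
      have : w 0 = 0 := by
        rcases mul_eq_zero.mp key.symm with h | h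
        · exact absurd h hv1
        · exact h
      simp [hv0, this]
    · simp [hv1]
  · refine ⟨w 0 / v 0, ?_⟩
    ext i
    fin_cases i
    · simp [hv0]
    · simp
      field_simp
      linear_combination key

theorem aux_intertwine (A B : Matrix (Fin 2) (Fin 2) ℂ) :
    (A * B - B * A) * A = A.adjugate * (A * B - B * A) := by
  ext i j
  fin_cases i <;> fin_cases j <;>
    simp [Matrix.mul_apply, Fin.sum_univ_two, Matrix.adjugate_fin_two] <;> ring

theorem aux_intertwine' (A B : Matrix (Fin 2) (Fin 2) ℂ) :
    (A * B - B * A) * B = B.adjugate * (A * B - B * A) := by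
  ext i j
  fin_cases i <;> fin_cases j <;>
    simp [Matrix.mul_apply, Fin.sum_univ_two, Matrix.adjugate_fin_two] <;> ring

theorem aux_det (A B : SL2C) (hA1 : A ≠ 1) (hA2 : A ≠ -1)
    (hfix : ¬ HasCommonEigenvector A B) :
    (A.1 * B.1 - B.1 * A.1).det ≠ 0 := by
  intro hd
  apply hfix
  by_cases hM : A.1 * B.1 - B.1 * A.1 = 0
  · obtain ⟨l, hl⟩ := IsAlgClosed.exists_root A.1.charpoly
      (by rw [Matrix.charpoly_degree_eq_dim]; simp)
    have hdet : (Matrix.scalar (Fin 2) l - A.1).det = 0 := by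
      rw [← Matrix.eval_charpoly]; exact hl
    obtain ⟨v, hv, hvk⟩ := Matrix.exists_mulVec_eq_zero_iff.mpr hdet
    have hN : Matrix.scalar (Fin 2) l - A.1 ≠ 0 := by
      intro h
      have hA : A.1 = Matrix.scalar (Fin 2) l := (sub_eq_zero.mp h).symm
      have h2 := A.2
      rw [hA] at h2
      simp at h2
      rcases h2 with rfl | rfl
      · apply hA1
        apply Subtype.ext
        rw [hA]; simp
      · apply hA2
        apply Subtype.ext
        rw [hA]
        ext i j
        fin_cases i <;> fin_cases j <;> simp
    have hc : (Matrix.scalar (Fin 2) l - A.1) * B.1 = B.1 * (Matrix.scalar (Fin 2) l - A.1) := by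
      rw [sub_mul, mul_sub, sub_eq_zero.mp hM]
      congr 1
      ext i j
      simp [mul_comm]
    have hw : (Matrix.scalar (Fin 2) l - A.1).mulVec (B.1.mulVec v) = 0 := by
      rw [Matrix.mulVec_mulVec, hc, ← Matrix.mulVec_mulVec, hvk, Matrix.mulVec_zero]
    refine ⟨v, hv, ⟨l, ?_⟩, aux_ker _ hN v _ hv hvk hw⟩
    rw [Matrix.sub_mulVec, sub_eq_zero] at hvk
    rw [← hvk]
    ext i
    simp [Matrix.mulVec_diagonal]
  · obtain ⟨v, hv, hvk⟩ := Matrix.exists_mulVec_eq_zero_iff.mpr hd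
    refine ⟨v, hv, aux_ker _ hM v _ hv hvk ?_, aux_ker _ hM v _ hv hvk ?_⟩
    · rw [Matrix.mulVec_mulVec, aux_intertwine, ← Matrix.mulVec_mulVec, hvk, Matrix.mulVec_zero]
    · rw [Matrix.mulVec_mulVec, aux_intertwine', ← Matrix.mulVec_mulVec, hvk, Matrix.mulVec_zero]

theorem aux_invol (A B : SL2C) (hd : (A.1 * B.1 - B.1 * A.1).det ≠ 0) :
    ∃ P : SL2C, P * A * P⁻¹ = A⁻¹ ∧ P * B * P⁻¹ = B⁻¹ ∧ P * P = -1 ∧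
      Matrix.trace (P * A : SL2C).1 = 0 := by
  obtain ⟨s, hs⟩ := IsAlgClosed.exists_pow_nat_eq (A.1 * B.1 - B.1 * A.1).det (n := 2) (by norm_num)
  have hs0 : s ≠ 0 := by
    rintro rfl
    apply hd; rw [← hs]; simp
  obtain ⟨P, hP⟩ : ∃ P : SL2C, (P : Matrix (Fin 2) (Fin 2) ℂ) =
      s⁻¹ • (A.1 * B.1 - B.1 * A.1) := by
    refine ⟨⟨s⁻¹ • (A.1 * B.1 - B.1 * A.1), ?_⟩, rfl⟩
    rw [Matrix.det_smul, ← hs]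
    simp [hs0]
  refine ⟨P, ?_, ?_, ?_, ?_⟩
  · rw [mul_inv_eq_iff_eq_mul]
    apply Subtype.ext
    simp only [Matrix.SpecialLinearGroup.coe_mul, Matrix.SpecialLinearGroup.coe_inv]
    rw [hP, Matrix.smul_mul, Matrix.mul_smul, aux_intertwine]
  · rw [mul_inv_eq_iff_eq_mul]
    apply Subtype.ext
    simp only [Matrix.SpecialLinearGroup.coe_mul, Matrix.SpecialLinearGroup.coe_inv]
    rw [hP, Matrix.smul_mul, Matrix.mul_smul, aux_intertwine']
  · apply Subtype.ext
    have hsq : (A.1 * B.1 - B.1 * A.1) * (A.1 * B.1 - B.1 * A.1)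
        = -((A.1 * B.1 - B.1 * A.1).det • (1 : Matrix (Fin 2) (Fin 2) ℂ)) := by
      ext i j
      fin_cases i <;> fin_cases j <;>
        simp [Matrix.mul_apply, Fin.sum_univ_two, Matrix.det_fin_two] <;> ring
    simp only [Matrix.SpecialLinearGroup.coe_mul, Matrix.SpecialLinearGroup.coe_neg,
      Matrix.SpecialLinearGroup.coe_one]
    rw [hP, Matrix.smul_mul, Matrix.mul_smul, hsq, ← hs, smul_neg, smul_neg, smul_smul, smul_smul]
    congr 1
    rw [show s⁻¹ * s⁻¹ * s ^ 2 = 1 by field_simp, one_smul]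
  · simp only [Matrix.SpecialLinearGroup.coe_mul]
    rw [hP, Matrix.smul_mul, Matrix.trace_smul]
    have : Matrix.trace ((A.1 * B.1 - B.1 * A.1) * A.1) = 0 := by
      simp [Matrix.trace_fin_two, Matrix.mul_apply, Fin.sum_univ_two]
      ring
    rw [this, smul_zero]

theorem aux_discrete {G : Type*} [Group G] [TopologicalSpace G] [IsTopologicalGroup G] [T1Space G]
    (H K : Subgroup G) (C : Set G) (hC : C.Finite) (hcov : ∀ h ∈ K, ∃ c ∈ C, c * h ∈ H)
    (hH : DiscreteTopology H) : DiscreteTopology K := by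
  classical
  obtain ⟨U, hU, hUH⟩ : ∃ U ∈ nhds (1 : G), ∀ g ∈ U, g ∈ H → g = 1 := by
    have h1 : ({1} : Set H) ∈ nhds (1 : H) := by
      rw [nhds_discrete]; exact Set.mem_singleton _
    rw [nhds_subtype_eq_comap] at h1
    obtain ⟨U, hU, hs⟩ := h1
    refine ⟨U, hU, fun g hg hgH => ?_⟩
    have := @hs ⟨g, hgH⟩ hg
    exact congrArg Subtype.val this
  have hcont : Filter.Tendsto (fun p : G × G => p.1⁻¹ * p.2) (nhds ((1 : G), (1 : G))) (nhds 1) := by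
    have : Continuous (fun p : G × G => p.1⁻¹ * p.2) := by fun_prop
    simpa using this.tendsto ((1 : G), (1 : G))
  have hpre := hcont hU
  rw [Filter.mem_map, nhds_prod_eq, Filter.mem_prod_same_iff] at hpre
  obtain ⟨V, hV, hVU⟩ := hpre
  have hfin : (V ∩ (K : Set G)).Finite := by
    choose! f hf using hcov
    refine Set.Finite.of_finite_image (f := f) (hC.subset ?_) ?_
    · rintro _ ⟨x, hx, rfl⟩
      exact (hf x hx.2).1
    · intro x hx y hy hxy
      have h1 := (hf x hx.2).2
      have h2 := (hf y hy.2).2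
      rw [← hxy] at h2
      have h3 : x⁻¹ * y ∈ H := by
        have := H.mul_mem (H.inv_mem h1) h2
        simpa [mul_assoc] using this
      have h4 : x⁻¹ * y ∈ U := hVU (Set.mk_mem_prod hx.1 hy.1)
      exact inv_mul_eq_one.mp (hUH _ h4 h3)
  have hW : V ∩ ((V ∩ (K : Set G)) \ {1})ᶜ ∈ nhds (1 : G) := by
    refine Filter.inter_mem hV ?_
    refine (hfin.subset Set.sdiff_subset).isClosed.isOpen_compl.mem_nhds ?_
    simp
  apply discreteTopology_of_isOpen_singleton_one
  rw [isOpen_singleton_iff_nhds_eq_pure]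
  apply le_antisymm _ (pure_le_nhds _)
  rw [Filter.le_pure_iff, nhds_subtype_eq_comap]
  refine ⟨_, hW, ?_⟩
  rintro ⟨x, hx⟩ ⟨hxV, hxn⟩
  by_contra hne
  apply hxn
  refine ⟨⟨hxV, hx⟩, ?_⟩
  intro h
  apply hne
  exact Subtype.ext h

theorem aux_cover {G : Type*} [Group G] (A B P : G) (hA : P * A * P⁻¹ = A⁻¹)
    (hB : P * B * P⁻¹ = B⁻¹) :
    ∀ h ∈ Subgroup.closure {P * A, B}, ∃ c ∈ (Subgroup.zpowers P : Set G),
      c * h ∈ Subgroup.closure {A, B} := by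
  have hAm : A ∈ Subgroup.closure {A, B} := Subgroup.subset_closure (by simp)
  have hBm : B ∈ Subgroup.closure {A, B} := Subgroup.subset_closure (by simp)
  have gen : ∀ Q : G, Q * A * Q⁻¹ = A⁻¹ → Q * B * Q⁻¹ = B⁻¹ → ∀ g ∈ Subgroup.closure {A, B},
      Q * g * Q⁻¹ ∈ Subgroup.closure {A, B} := by
    intro Q h1 h2 g hg
    induction hg using Subgroup.closure_induction with
    | mem x hx =>
      rcases hx with rfl | rfl
      · rw [h1]; exact inv_mem hAm
      · rw [h2]; exact inv_mem hBm
    | one => simp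
    | mul x y _ _ hx hy =>
      have := mul_mem hx hy
      simpa [mul_assoc] using this
    | inv x _ hx =>
      have := inv_mem hx
      simpa [mul_assoc] using this
  have hA' : P⁻¹ * A * P⁻¹⁻¹ = A⁻¹ := by
    have h3 : A = P⁻¹ * A⁻¹ * P := by rw [← hA]; group
    conv_rhs => rw [h3]
    group
  have hB' : P⁻¹ * B * P⁻¹⁻¹ = B⁻¹ := by
    have h3 : B = P⁻¹ * B⁻¹ * P := by rw [← hB]; group
    conv_rhs => rw [h3]
    group
  have hP : P ∈ Subgroup.normalizer (Subgroup.closure {A, B} : Set G) := by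
    rw [Subgroup.mem_normalizer_iff]
    intro g
    refine ⟨gen P hA hB g, fun h => ?_⟩
    have := gen P⁻¹ hA' hB' _ h
    simpa [mul_assoc] using this
  have hc : ∀ c ∈ Subgroup.zpowers P, ∀ g ∈ Subgroup.closure {A, B},
      c * g * c⁻¹ ∈ Subgroup.closure {A, B} := by
    intro c hc g hg
    have : c ∈ Subgroup.normalizer (Subgroup.closure {A, B} : Set G) :=
      (Subgroup.zpowers_le.mpr hP) hc
    exact (Subgroup.mem_normalizer_iff.mp this g).mp hg
  intro h hh
  induction hh using Subgroup.closure_induction with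
  | mem x hx =>
    rcases hx with rfl | rfl
    · exact ⟨P⁻¹, inv_mem (Subgroup.mem_zpowers P), by simpa using hAm⟩
    · exact ⟨1, one_mem _, by simpa using hBm⟩
  | one => exact ⟨1, one_mem _, by simp⟩
  | mul x y _ _ hx hy =>
    obtain ⟨c, hc1, hc2⟩ := hx
    obtain ⟨d, hd1, hd2⟩ := hy
    refine ⟨d * c, mul_mem hd1 hc1, ?_⟩
    have := mul_mem (hc d hd1 _ hc2) hd2
    simpa [mul_assoc] using this
  | inv x _ hx =>
    obtain ⟨c, hc1, hc2⟩ := hx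
    refine ⟨c⁻¹, inv_mem hc1, ?_⟩
    have := hc c⁻¹ (inv_mem hc1) _ (inv_mem hc2)
    simpa [mul_assoc] using this

theorem aux_trace (X Y : SL2C) :
    Matrix.trace (X * Y).1 = Matrix.trace X.1 * Matrix.trace Y.1 - Matrix.trace (X * Y⁻¹).1 := by
  simp [Matrix.SpecialLinearGroup.coe_inv, Matrix.trace_fin_two, Matrix.mul_apply,
    Fin.sum_univ_two, Matrix.adjugate_fin_two]
  ring

theorem aux_trace_inv (X : SL2C) : Matrix.trace (X⁻¹).1 = Matrix.trace X.1 := by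
  simp [Matrix.SpecialLinearGroup.coe_inv, Matrix.trace_fin_two, Matrix.adjugate_fin_two]
  ring

theorem aux_trace_comm (X Y : SL2C) : Matrix.trace (X * Y).1 = Matrix.trace (Y * X).1 := by
  simp only [Matrix.SpecialLinearGroup.coe_mul]
  exact Matrix.trace_mul_comm _ _

theorem aux_gamma (A B P : SL2C) (hA : P * A * P⁻¹ = A⁻¹) (hB : P * B * P⁻¹ = B⁻¹) :
    γp (P * A) B = βp B - γp A B := by
  have h1 : P * A * B * (P * A)⁻¹ * B⁻¹ = (A⁻¹ * B⁻¹ * A) * B⁻¹ := by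
    have h3 : P * A * B * (P * A)⁻¹ = (P * A * P⁻¹) * (P * B * P⁻¹) * (P * A * P⁻¹)⁻¹ := by group
    rw [h3, hA, hB, inv_inv]
  have h2 : Matrix.trace (A⁻¹ * B⁻¹ * A).1 = Matrix.trace B.1 := by
    rw [aux_trace_comm, show A * (A⁻¹ * B⁻¹) = B⁻¹ by group, aux_trace_inv]
  have h4 : Matrix.trace (A⁻¹ * B⁻¹ * A * B⁻¹⁻¹).1 = Matrix.trace (A * B * A⁻¹ * B⁻¹).1 := by
    rw [show A⁻¹ * B⁻¹ * A * B⁻¹⁻¹ = (A⁻¹ * B⁻¹) * (A * B) by simp only [mul_assoc, inv_inv], aux_trace_comm]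
    simp only [mul_assoc]
  unfold γp βp
  rw [h1, aux_trace, h2, h4, aux_trace_inv]
  ring

/-- Lemma 4.3, final assertion: if `A`, `B` have disjoint fixed points then there is
`F` of order two with `γ(F,B) = β(B) - γ(A,B)` preserving discreteness of `⟨·,B⟩`. -/
theorem exists_order_two_companion (A B : SL2C)
    (hA1 : A ≠ 1) (hA2 : A ≠ -1) (hB1 : B ≠ 1) (hB2 : B ≠ -1)
    (hfix : ¬ HasCommonEigenvector A B) :
    ∃ F : SL2C, Matrix.trace (F : Matrix (Fin 2) (Fin 2) ℂ) = 0 ∧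
      γp F B = βp B - γp A B ∧
      (IsDiscreteSubgroup (Subgroup.closure {A, B}) →
        IsDiscreteSubgroup (Subgroup.closure {F, B})) := by
  obtain ⟨P, hPA, hPB, hPP, htr⟩ := aux_invol A B (aux_det A B hA1 hA2 hfix)
  refine ⟨P * A, htr, aux_gamma A B P hPA hPB, fun hdisc => ?_⟩
  have hfin : (Subgroup.zpowers P : Set SL2C).Finite := by
    have : IsOfFinOrder P := by
      rw [isOfFinOrder_iff_pow_eq_one]
      refine ⟨4, by norm_num, ?_⟩
      rw [show P ^ 4 = (P * P) * (P * P) by simp only [pow_succ, pow_zero, one_mul, mul_assoc], hPP]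
      simp
    exact this.finite_zpowers
  have : IsTopologicalGroup SL2C := Matrix.SpecialLinearGroup.topologicalGroup
  have : T1Space SL2C := inferInstanceAs (T1Space {M : Matrix (Fin 2) (Fin 2) ℂ // M.det = 1})
  exact aux_discrete _ _ _ hfin (aux_cover A B P hPA hPB) hdisc

end
end

section
/- Let A, H ∈ SL(2,ℂ) with A elliptic of order n ≥ 3 and H = C·A·C⁻¹ or H = −C·A·C⁻¹ for some C ∈ SL(2,ℂ) (so A and H are conjugate elliptics of order n). If the image in PSL(2,ℂ) of the subgroup generated by A and H is isomorphic to the alternating group A₄, then γ(A,H) = −2 and β(A) = β(H) = −3. -/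
open Matrix Real

noncomputable section

lemma scalar_aux (K : SL2C) (h01 : K.1 0 1 = 0) (h10 : K.1 1 0 = 0) (h : K.1 0 0 = K.1 1 1) :
    K = 1 ∨ K = -1 := by
  have hd := K.2
  rw [Matrix.det_fin_two, h01, h10, h] at hd
  have : (K.1 1 1 - 1) * (K.1 1 1 + 1) = 0 := by linear_combination hd
  rcases mul_eq_zero.mp this with h1 | h1
  · left
    have h1' : K.1 1 1 = 1 := by linear_combination h1
    apply Subtype.ext
    ext i j
    fin_cases i <;> fin_cases j <;> simp [h01, h10, h, h1']
  · right
    have h1' : K.1 1 1 = -1 := by linear_combination h1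
    apply Subtype.ext
    ext i j
    fin_cases i <;> fin_cases j <;> simp [h01, h10, h, h1']

lemma center_aux (K : SL2C) : K ∈ Subgroup.center SL2C ↔ K = 1 ∨ K = -1 := by
  constructor
  · intro h
    rw [Matrix.SpecialLinearGroup.mem_center_iff] at h
    obtain ⟨r, -, hr⟩ := h
    apply scalar_aux <;> rw [← hr] <;> simp
  · rintro (rfl | rfl)
    · exact one_mem _
    · rw [Subgroup.mem_center_iff]
      intro g
      simp

lemma trace_sq_aux (K : SL2C) (hK : K ^ 2 = 1 ∨ K ^ 2 = -1) (h1 : ¬ (K = 1 ∨ K = -1)) :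
    Matrix.trace K.1 = 0 := by
  by_contra ht
  apply h1
  have hs : ∃ s : ℂ, K.1 ^ 2 = Matrix.scalar (Fin 2) s := by
    rcases hK with h | h
    · exact ⟨1, by simpa using congrArg Subtype.val h⟩
    · exact ⟨-1, by rw [map_neg, map_one]; simpa using congrArg Subtype.val h⟩
  obtain ⟨s, hs⟩ := hs
  have e00 := congrFun (congrFun hs 0) 0
  have e01 := congrFun (congrFun hs 0) 1
  have e10 := congrFun (congrFun hs 1) 0
  have e11 := congrFun (congrFun hs 1) 1
  simp [pow_two, Matrix.mul_apply, Fin.sum_univ_two] at e00 e01 e10 e11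
  rw [Matrix.trace_fin_two] at ht
  apply scalar_aux <;> apply mul_left_cancel₀ ht
  · linear_combination e01
  · linear_combination e10
  · linear_combination e00 - e11

lemma trace_cube_aux (K : SL2C) (hK : K ^ 3 = 1 ∨ K ^ 3 = -1) (h1 : ¬ (K = 1 ∨ K = -1)) :
    Matrix.trace K.1 ^ 2 = 1 := by
  by_contra ht
  apply h1
  have hs : ∃ s : ℂ, K.1 ^ 3 = Matrix.scalar (Fin 2) s := by
    rcases hK with h | h
    · exact ⟨1, by simpa using congrArg Subtype.val h⟩
    · exact ⟨-1, by rw [map_neg, map_one]; simpa using congrArg Subtype.val h⟩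
  obtain ⟨s, hs⟩ := hs
  have e00 := congrFun (congrFun hs 0) 0
  have e01 := congrFun (congrFun hs 0) 1
  have e10 := congrFun (congrFun hs 1) 0
  have e11 := congrFun (congrFun hs 1) 1
  have hd := K.2
  rw [Matrix.det_fin_two] at hd
  simp [pow_succ, Matrix.mul_apply, Fin.sum_univ_two] at e00 e01 e10 e11
  rw [Matrix.trace_fin_two] at ht
  have ht' := sub_ne_zero.mpr ht
  apply scalar_aux <;> apply mul_left_cancel₀ ht'
  · linear_combination e01 + K.1 0 1 * hd
  · linear_combination e10 + K.1 1 0 * hd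
  · linear_combination e00 - e11 + (K.1 0 0 - K.1 1 1) * hd

lemma a4_fact : ∀ a h : alternatingGroup (Fin 4), a ^ 2 ≠ 1 →
    a ^ 3 = 1 ∧ (a * h * a⁻¹ * h⁻¹) ^ 2 = 1 := by
  decide +kernel

lemma a4_noncomm : ∃ x y : alternatingGroup (Fin 4), x * y ≠ y * x := by
  decide +kernel

/-- Lemma 4.8, `A₄` case: parameters of `A₄` with conjugate elliptic generators. -/
theorem params_A4 (A H : SL2C) (n : ℕ) (hn : 3 ≤ n)
    (hA : IsEllipticOfOrder A n)
    (hconj : ∃ C : SL2C, H = C * A * C⁻¹ ∨ H = -(C * A * C⁻¹))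
    (hiso : Nonempty (↥(pslImage (Subgroup.closure {A, H})) ≃* ↥(alternatingGroup (Fin 4)))) :
    γp A H = -2 ∧ βp A = -3 ∧ βp H = -3 := by
  have hA1 : ¬ (A = 1 ∨ A = -1) := by
    have := hA.2 1 le_rfl (by omega)
    simpa using this
  have hA2 : ¬ (A ^ 2 = 1 ∨ A ^ 2 = -1) := by
    have := hA.2 2 (by norm_num) (by omega)
    simpa using this
  obtain ⟨e⟩ := hiso
  have mA : A ∈ Subgroup.closure {A, H} := Subgroup.subset_closure (by simp)
  have mH : H ∈ Subgroup.closure {A, H} := Subgroup.subset_closure (by simp)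
  let π' : SL2C →* PSL2C := QuotientGroup.mk' (Subgroup.center SL2C)
  have hker : ∀ K : SL2C, π' K = 1 ↔ K = 1 ∨ K = -1 := fun K => by
    rw [← center_aux]; exact QuotientGroup.eq_one_iff K
  let a : ↥(pslImage (Subgroup.closure {A, H})) := ⟨π' A, Subgroup.mem_map_of_mem _ mA⟩
  let h : ↥(pslImage (Subgroup.closure {A, H})) := ⟨π' H, Subgroup.mem_map_of_mem _ mH⟩
  have ha2 : (e a) ^ 2 ≠ 1 := by
    intro hh
    rw [← map_pow, e.map_eq_one_iff, Subtype.ext_iff] at hh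
    apply hA2
    rw [← hker, map_pow]
    exact hh
  obtain ⟨h3, hc⟩ := a4_fact (e a) (e h) ha2
  rw [← map_pow, e.map_eq_one_iff, Subtype.ext_iff] at h3
  have hA3 : A ^ 3 = 1 ∨ A ^ 3 = -1 := by
    rw [← hker, map_pow]; exact h3
  simp only [← map_inv, ← map_mul, ← map_pow] at hc
  rw [e.map_eq_one_iff, Subtype.ext_iff] at hc
  have hC2 : (A * H * A⁻¹ * H⁻¹) ^ 2 = 1 ∨ (A * H * A⁻¹ * H⁻¹) ^ 2 = -1 := by
    rw [← hker]; simp only [map_pow, map_mul, map_inv]; exact hc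
  have hC1 : ¬ (A * H * A⁻¹ * H⁻¹ = 1 ∨ A * H * A⁻¹ * H⁻¹ = -1) := by
    rw [← hker]
    intro hh
    simp only [map_mul, map_inv] at hh
    have hcomm : π' A * π' H = π' H * π' A := by
      rw [mul_inv_eq_one, mul_inv_eq_iff_eq_mul] at hh
      exact hh
    have hall : ∀ x ∈ pslImage (Subgroup.closure {A, H}),
        ∀ y ∈ pslImage (Subgroup.closure {A, H}), x * y = y * x := by
      intro x hx y hy
      rw [pslImage, MonoidHom.map_closure] at hx hy
      refine Subgroup.closure_induction₂ (p := fun x y _ _ => Commute x y)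
        ?_ ?_ ?_ ?_ ?_ ?_ ?_ hx hy
      · intro u v hu hv
        rw [Set.image_pair] at hu hv
        rcases hu with rfl | rfl <;> rcases hv with rfl | rfl
        · exact Commute.refl _
        · exact hcomm
        · exact hcomm.symm
        · exact Commute.refl _
      · intro x _; exact Commute.one_left x
      · intro x _; exact Commute.one_right x
      · intro x y z _ _ _ h1 h2; exact h1.mul_left h2
      · intro x y z _ _ _ h1 h2; exact h1.mul_right h2
      · intro x y _ _ h1; exact h1.inv_left
      · intro x y _ _ h1; exact h1.inv_right
    obtain ⟨x, y, hxy⟩ := a4_noncomm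
    apply hxy
    apply e.symm.injective
    rw [map_mul, map_mul]
    exact Subtype.ext (hall _ (e.symm x).2 _ (e.symm y).2)
  have tA := trace_cube_aux A hA3 hA1
  have tC := trace_sq_aux _ hC2 hC1
  have tH : Matrix.trace H.1 ^ 2 = Matrix.trace A.1 ^ 2 := by
    obtain ⟨C, hC⟩ := hconj
    have key : Matrix.trace (C * A * C⁻¹ : SL2C).1 = Matrix.trace A.1 := by
      have : (C * A * C⁻¹ : SL2C).1 = (C * A).1 * (C⁻¹).1 := rfl
      rw [this, Matrix.trace_mul_comm]
      have h2 : (C⁻¹).1 * (C * A).1 = (C⁻¹ * (C * A) : SL2C).1 := rfl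
      rw [h2, inv_mul_cancel_left]
    rcases hC with rfl | rfl
    · rw [key]
    · have : (-(C * A * C⁻¹) : SL2C).1 = -(C * A * C⁻¹ : SL2C).1 := rfl
      rw [this, Matrix.trace_neg, key, neg_sq]
  refine ⟨?_, ?_, ?_⟩
  · unfold γp; rw [tC]; norm_num
  · unfold βp; rw [tA]; norm_num
  · unfold βp; rw [tH, tA]; norm_num

end
end

section
/- Let A, H ∈ SL(2,ℂ) with A elliptic of order n ≥ 3 and H = C·A·C⁻¹ or H = −C·A·C⁻¹ for some C ∈ SL(2,ℂ) (so A and H are conjugate elliptics of order n). If the image in PSL(2,ℂ) of the subgroup generated by A and H is isomorphic to the alternating group A₅, then the triple (γ(A,H), β(A), β(H)) equals (−1, −3, −3), or ((√5−3)/2, (√5−5)/2, (√5−5)/2) = (−0.3819…, −1.3819…, −1.3819…), or (−(3+√5)/2, −(5+√5)/2, −(5+√5)/2) = (−2.618…, −3.618…, −3.618…). -/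
open Matrix Real

noncomputable section

lemma d1 : ∀ g : Equiv.Perm (Fin 5), Equiv.Perm.sign g = 1 → g ^ 2 = 1 ∨ g ^ 3 = 1 ∨ g ^ 5 = 1 := by
  decide +kernel

lemma d2 : ∀ a : Equiv.Perm (Fin 5), a ^ 3 = 1 → ∀ b : Equiv.Perm (Fin 5), b ^ 3 = 1 →
    (∃ i, a i = i ∧ b i = i) ∨ ((a * b) ^ 5 = 1 ∧ (a * b * a⁻¹ * b⁻¹) ^ 3 = 1) := by
  decide +kernel

lemma cayley (g : SL2C) : (g : Matrix (Fin 2) (Fin 2) ℂ) ^ 2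
    = (g : Matrix (Fin 2) (Fin 2) ℂ).trace • (g : Matrix (Fin 2) (Fin 2) ℂ) - 1 := by
  have hd := g.det_coe
  rw [Matrix.det_fin_two] at hd
  ext i j
  fin_cases i <;> fin_cases j <;>
    simp [pow_two, Matrix.mul_apply, Fin.sum_univ_two, Matrix.trace_fin_two] <;>
    first | linear_combination (-1 : ℂ) * hd | linear_combination hd | ring

lemma scalar_of (g : SL2C) (c d : ℂ) (hc : c ≠ 0)
    (h : c • (g : Matrix (Fin 2) (Fin 2) ℂ) = d • 1) : g = 1 ∨ g = -1 := by
  have hd := g.det_coe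
  rw [Matrix.det_fin_two] at hd
  have h00 := congrFun (congrFun h 0) 0
  have h01 := congrFun (congrFun h 0) 1
  have h10 := congrFun (congrFun h 1) 0
  have h11 := congrFun (congrFun h 1) 1
  simp [hc] at h00 h01 h10 h11
  have e : g 0 0 = g 1 1 := mul_left_cancel₀ hc (h00.trans h11.symm)
  rw [h01, e] at hd
  have : (g 1 1 - 1) * (g 1 1 + 1) = 0 := by linear_combination hd
  rcases mul_eq_zero.1 this with h | h
  · left
    have h' : g 1 1 = 1 := by linear_combination h
    ext i j
    fin_cases i <;> fin_cases j <;> simp [h01, h10, e, h']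
  · right
    have h' : g 1 1 = -1 := by linear_combination h
    ext i j
    fin_cases i <;> fin_cases j <;> simp [h01, h10, e, h']

lemma pm_coe (g : SL2C) (h : g = 1 ∨ g = -1) :
    ∃ s : ℂ, s ^ 2 = 1 ∧ (g : Matrix (Fin 2) (Fin 2) ℂ) = s • 1 := by
  rcases h with h | h
  · exact ⟨1, by norm_num, by simp [h]⟩
  · exact ⟨-1, by norm_num, by simp [h]⟩

lemma tr2 (g : SL2C) (h : g ^ 2 = 1 ∨ g ^ 2 = -1) :
    (g = 1 ∨ g = -1) ∨ (g : Matrix (Fin 2) (Fin 2) ℂ).trace = 0 := by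
  by_cases ht : (g : Matrix (Fin 2) (Fin 2) ℂ).trace = 0
  · exact Or.inr ht
  left
  obtain ⟨s, -, hs⟩ := pm_coe _ h
  rw [Matrix.SpecialLinearGroup.coe_pow, cayley] at hs
  refine scalar_of g _ (s + 1) ht ?_
  rw [add_smul, ← hs]; simp

lemma tr3 (g : SL2C) (h : g ^ 3 = 1 ∨ g ^ 3 = -1) :
    (g = 1 ∨ g = -1) ∨ (g : Matrix (Fin 2) (Fin 2) ℂ).trace ^ 2 = 1 := by
  by_cases ht : (g : Matrix (Fin 2) (Fin 2) ℂ).trace ^ 2 - 1 = 0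
  · exact Or.inr (by linear_combination ht)
  left
  obtain ⟨s, -, hs⟩ := pm_coe _ h
  have c := cayley g
  rw [Matrix.SpecialLinearGroup.coe_pow] at hs
  generalize ht' : (g : Matrix (Fin 2) (Fin 2) ℂ).trace = t at *
  refine scalar_of g _ (s + t) ht ?_
  rw [add_smul, ← hs]
  have : (g : Matrix (Fin 2) (Fin 2) ℂ) ^ 3 = (t ^ 2 - 1) • (g : Matrix (Fin 2) (Fin 2) ℂ) - t • 1 := by
    rw [pow_succ, c, sub_mul, smul_mul_assoc, ← pow_two, c, smul_sub, one_mul]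
    module
  rw [this]; simp

lemma tr5 (g : SL2C) (h : g ^ 5 = 1 ∨ g ^ 5 = -1) :
    (g = 1 ∨ g = -1) ∨ (g : Matrix (Fin 2) (Fin 2) ℂ).trace ^ 4
      - 3 * (g : Matrix (Fin 2) (Fin 2) ℂ).trace ^ 2 + 1 = 0 := by
  by_cases ht : (g : Matrix (Fin 2) (Fin 2) ℂ).trace ^ 4
      - 3 * (g : Matrix (Fin 2) (Fin 2) ℂ).trace ^ 2 + 1 = 0
  · exact Or.inr ht
  left
  obtain ⟨s, -, hs⟩ := pm_coe _ h
  have c := cayley g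
  rw [Matrix.SpecialLinearGroup.coe_pow] at hs
  generalize ht' : (g : Matrix (Fin 2) (Fin 2) ℂ).trace = t at *
  refine scalar_of g _ (s + (t ^ 3 - 2 * t)) ht ?_
  rw [add_smul s, ← hs]
  have h3 : (g : Matrix (Fin 2) (Fin 2) ℂ) ^ 3 = (t ^ 2 - 1) • (g : Matrix (Fin 2) (Fin 2) ℂ) - t • 1 := by
    rw [pow_succ, c, sub_mul, smul_mul_assoc, ← pow_two, c, smul_sub, one_mul]
    module
  have h5 : (g : Matrix (Fin 2) (Fin 2) ℂ) ^ 5 = (t ^ 4 - 3 * t ^ 2 + 1) • (g : Matrix (Fin 2) (Fin 2) ℂ)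
      - (t ^ 3 - 2 * t) • 1 := by
    have : (g : Matrix (Fin 2) (Fin 2) ℂ) ^ 5 = (g : Matrix (Fin 2) (Fin 2) ℂ) ^ 3 * (g : Matrix (Fin 2) (Fin 2) ℂ) ^ 2 := by
      rw [← pow_add]
    rw [this, h3, c, sub_mul, mul_sub, smul_mul_assoc, mul_smul_comm, ← pow_two, c, mul_one,
      smul_mul_assoc, one_mul]
    module
  rw [h5]; simp

lemma fricke (A B : SL2C) : γp A B = (A : Matrix (Fin 2) (Fin 2) ℂ).trace ^ 2
    + (B : Matrix (Fin 2) (Fin 2) ℂ).trace ^ 2 + ((A * B : SL2C) : Matrix (Fin 2) (Fin 2) ℂ).trace ^ 2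
    - (A : Matrix (Fin 2) (Fin 2) ℂ).trace * (B : Matrix (Fin 2) (Fin 2) ℂ).trace
      * ((A * B : SL2C) : Matrix (Fin 2) (Fin 2) ℂ).trace - 4 := by
  have hA := A.det_coe
  have hB := B.det_coe
  rw [Matrix.det_fin_two] at hA hB
  simp only [γp, Matrix.SpecialLinearGroup.coe_mul, Matrix.SpecialLinearGroup.coe_inv,
    Matrix.adjugate_fin_two, Matrix.trace_fin_two, Matrix.mul_apply, Fin.sum_univ_two]
  simp
  generalize (A : Matrix (Fin 2) (Fin 2) ℂ) 0 0 = a at *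
  generalize (A : Matrix (Fin 2) (Fin 2) ℂ) 0 1 = b at *
  generalize (A : Matrix (Fin 2) (Fin 2) ℂ) 1 0 = c at *
  generalize (A : Matrix (Fin 2) (Fin 2) ℂ) 1 1 = d at *
  generalize (B : Matrix (Fin 2) (Fin 2) ℂ) 0 0 = p at *
  generalize (B : Matrix (Fin 2) (Fin 2) ℂ) 0 1 = q at *
  generalize (B : Matrix (Fin 2) (Fin 2) ℂ) 1 0 = r at *
  generalize (B : Matrix (Fin 2) (Fin 2) ℂ) 1 1 = s at *
  grind

lemma mem_center_iff_pm (g : SL2C) : g ∈ Subgroup.center SL2C ↔ g = 1 ∨ g = -1 := by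
  constructor
  · intro h
    rw [Matrix.SpecialLinearGroup.mem_center_iff] at h
    obtain ⟨r, -, hr⟩ := h
    refine scalar_of g 1 r one_ne_zero ?_
    rw [← hr, one_smul, Matrix.scalar_apply, Matrix.smul_one_eq_diagonal]
  · rintro (rfl | rfl)
    · exact one_mem _
    · rw [Subgroup.mem_center_iff]; intro g; simp

/-- A surjection of the generated group to the alternating group, with kernel `{1,-1}`. -/
lemma getf (Γ : Subgroup SL2C)
    (hiso : Nonempty (↥(pslImage Γ) ≃* ↥(alternatingGroup (Fin 5)))) :
    ∃ f : Γ →* alternatingGroup (Fin 5), Function.Surjective f ∧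
      ∀ g : Γ, f g = 1 ↔ ((g : SL2C) = 1 ∨ (g : SL2C) = -1) := by
  obtain ⟨e⟩ := hiso
  refine ⟨e.toMonoidHom.comp ((QuotientGroup.mk' (Subgroup.center SL2C)).subgroupMap Γ), ?_, ?_⟩
  · exact e.surjective.comp (MonoidHom.subgroupMap_surjective _ _)
  · intro g
    rw [← mem_center_iff_pm]
    rw [← QuotientGroup.eq_one_iff]
    change e ((QuotientGroup.mk' (Subgroup.center SL2C)).subgroupMap Γ g) = 1 ↔ _
    refine (map_eq_one_iff e e.injective).trans ?_
    exact Subtype.ext_iff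

lemma gen {A H : SL2C} (f : Subgroup.closure {A, H} →* alternatingGroup (Fin 5))
    (hf : Function.Surjective f) (hA : A ∈ Subgroup.closure {A, H}) (hH : H ∈ Subgroup.closure {A, H})
    (S : Subgroup (alternatingGroup (Fin 5)))
    (h1 : f ⟨A, hA⟩ ∈ S) (h2 : f ⟨H, hH⟩ ∈ S) : S = ⊤ := by
  rw [eq_top_iff]
  rintro y -
  obtain ⟨⟨g, hg⟩, rfl⟩ := hf y
  have : Subgroup.closure {A, H} ≤ (S.comap f).map (Subgroup.closure {A, H}).subtype := by
    rw [Subgroup.closure_le]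
    rintro x (rfl | rfl)
    · exact ⟨⟨_, hA⟩, h1, rfl⟩
    · exact ⟨⟨_, hH⟩, h2, rfl⟩
  obtain ⟨x, hx, rfl⟩ := this hg
  exact hx

lemma notfix (i : Fin 5) : ∃ g : Equiv.Perm (Fin 5), Equiv.Perm.sign g = 1 ∧ g i ≠ i := by
  revert i; decide +kernel

lemma notcomm (a : Equiv.Perm (Fin 5)) (ha : Equiv.Perm.sign a = 1) (h1 : a ≠ 1) :
   ∃ g : Equiv.Perm (Fin 5), Equiv.Perm.sign g = 1 ∧ a * g ≠ g * a := by
  revert a; decide +kernel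

lemma alg5 (u z w : ℂ) (hu : u ^ 2 - 3 * u + 1 = 0)
    (hw : w = 2 * u + z ^ 2 - u * z - 2)
    (hz2 : z = 2 ∨ z = -2 ∨ z = 0 ∨ z ^ 2 = 1 ∨ z ^ 4 - 3 * z ^ 2 + 1 = 0)
    (hw2 : w = 0 ∨ w ^ 2 = 1 ∨ w ^ 4 - 3 * w ^ 2 + 1 = 0) : w - 2 = u - 3 := by
  have key : (z - 1) * (z - (u - 1)) = 0 := by
    have fac : z ^ 4 - 3 * z ^ 2 + 1 = 0 → z = u - 1 ∨ z = 1 - u ∨ z = u - 2 ∨ z = 2 - u := by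
      intro h
      have : (z - (u - 1)) * ((z - (1 - u)) * ((z - (u - 2)) * (z - (2 - u)))) = 0 := by
        have e : (z - (u - 1)) * ((z - (1 - u)) * ((z - (u - 2)) * (z - (2 - u))))
          = (z ^ 2 - u) * (z ^ 2 - (3 - u)) := by grind
        rw [e]; grind
      rcases mul_eq_zero.1 this with h | h
      · left; linear_combination h
      rcases mul_eq_zero.1 h with h | h
      · right; left; linear_combination h
      rcases mul_eq_zero.1 h with h | h
      · right; right; left; linear_combination h
      · right; right; right; linear_combination h
    have fac1 : z ^ 2 = 1 → z = 1 ∨ z = -1 := fun h => by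
      have : (z - 1) * (z + 1) = 0 := by linear_combination h
      rcases mul_eq_zero.1 this with h | h
      · left; linear_combination h
      · right; linear_combination h
    rcases hz2 with h | h | h | h | h
    · subst h; rcases hw2 with h | h | h <;> grind
    · subst h; rcases hw2 with h | h | h <;> grind
    · subst h; rcases hw2 with h | h | h <;> grind
    · rcases fac1 h with h | h
      · rw [h]; ring
      · subst h; rcases hw2 with h | h | h <;> grind
    · rcases fac h with h | h | h | h
      · rw [h]; ring
      · subst h; rcases hw2 with h | h | h <;> grind
      · subst h; rcases hw2 with h | h | h <;> grind
      · subst h; rcases hw2 with h | h | h <;> grind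
  linear_combination hw + key

lemma root5 (u : ℂ) (hu : u ^ 2 - 3 * u + 1 = 0) :
    u = (((3 + Real.sqrt 5) / 2 : ℝ) : ℂ) ∨ u = (((3 - Real.sqrt 5) / 2 : ℝ) : ℂ) := by
  have h5 : ((Real.sqrt 5 : ℝ) : ℂ) ^ 2 = 5 := by
    rw [← Complex.ofReal_pow, Real.sq_sqrt (by norm_num)]; norm_num
  have : (u - (((3 + Real.sqrt 5) / 2 : ℝ) : ℂ)) * (u - (((3 - Real.sqrt 5) / 2 : ℝ) : ℂ)) = 0 := by
    push_cast
    linear_combination hu - h5 / 4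
  rcases mul_eq_zero.1 this with h | h
  · left; linear_combination h
  · right; linear_combination h

lemma alg3 (z w : ℂ)
    (hw : w = 2 + z ^ 2 - z - 2)
    (hz2 : z = 2 ∨ z = -2 ∨ z ^ 4 - 3 * z ^ 2 + 1 = 0)
    (hw2 : w ^ 2 = 1) : w = 1 := by
  have : (w - 1) * (w + 1) = 0 := by linear_combination hw2
  rcases mul_eq_zero.1 this with h | h
  · linear_combination h
  · exfalso
    have h' : z ^ 2 = z - 1 := by linear_combination h - hw
    rcases hz2 with h | h | h <;> grind

set_option maxHeartbeats 600000 in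
/-- Lemma 4.8, `A₅` case: parameters of `A₅` with conjugate elliptic generators. -/
theorem params_A5 (A H : SL2C) (n : ℕ) (hn : 3 ≤ n)
    (hA : IsEllipticOfOrder A n)
    (hconj : ∃ C : SL2C, H = C * A * C⁻¹ ∨ H = -(C * A * C⁻¹))
    (hiso : Nonempty (↥(pslImage (Subgroup.closure {A, H})) ≃* ↥(alternatingGroup (Fin 5)))) :
    (γp A H = -1 ∧ βp A = -3 ∧ βp H = -3) ∨
      (γp A H = (((Real.sqrt 5 - 3) / 2 : ℝ) : ℂ) ∧
        βp A = (((Real.sqrt 5 - 5) / 2 : ℝ) : ℂ) ∧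
        βp H = (((Real.sqrt 5 - 5) / 2 : ℝ) : ℂ)) ∨
      (γp A H = ((-(3 + Real.sqrt 5) / 2 : ℝ) : ℂ) ∧
        βp A = ((-(5 + Real.sqrt 5) / 2 : ℝ) : ℂ) ∧
        βp H = ((-(5 + Real.sqrt 5) / 2 : ℝ) : ℂ)) := by
  have mA : A ∈ Subgroup.closure {A, H} := Subgroup.subset_closure (by simp)
  have mH : H ∈ Subgroup.closure {A, H} := Subgroup.subset_closure (by simp)
  obtain ⟨f, hf, hker⟩ := getf _ hiso
  have gen' := gen f hf mA mH
  set a : Subgroup.closure {A, H} := ⟨A, mA⟩ with ha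
  set b : Subgroup.closure {A, H} := ⟨H, mH⟩ with hb
  have hA1 : ¬ (A = 1 ∨ A = -1) := by
    have := hA.2 1 (by norm_num) (by omega)
    rw [pow_one] at this; tauto
  have hA2 : ¬ (A ^ 2 = 1 ∨ A ^ 2 = -1) := by
    have := hA.2 2 (by norm_num) (by omega)
    tauto
  -- translate powers
  have pw : ∀ (g : Subgroup.closure {A, H}) (k : ℕ), ((f g : alternatingGroup (Fin 5)) : Equiv.Perm (Fin 5)) ^ k = 1 ↔
      ((g : SL2C) ^ k = 1 ∨ (g : SL2C) ^ k = -1) := by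
    intro g k
    rw [← Subgroup.coe_pow, ← Subgroup.coe_pow, ← hker, map_pow]
    exact OneMemClass.coe_eq_one
  have hd : ∀ (g : Subgroup.closure {A, H}), ((g : SL2C) ^ 2 = 1 ∨ (g : SL2C) ^ 2 = -1) ∨
      ((g : SL2C) ^ 3 = 1 ∨ (g : SL2C) ^ 3 = -1) ∨ ((g : SL2C) ^ 5 = 1 ∨ (g : SL2C) ^ 5 = -1) := by
    intro g
    rw [← pw, ← pw, ← pw]
    exact d1 _ (Equiv.Perm.mem_alternatingGroup.1 (f g).2)
  have ha1 : (f a : Equiv.Perm (Fin 5)) ≠ 1 := by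
    have := pw a 1
    rw [pow_one, pow_one] at this
    exact fun h => hA1 (this.1 h)
  -- not commuting
  have hcomm : ¬ (A * H * A⁻¹ * H⁻¹ = 1 ∨ A * H * A⁻¹ * H⁻¹ = -1) := by
    intro h
    have h1 : f (a * b * a⁻¹ * b⁻¹) = 1 := (hker _).2 h
    have h2 : f a * f b = f b * f a := by
      simp only [map_mul, map_inv] at h1
      rw [mul_inv_eq_one, mul_inv_eq_iff_eq_mul] at h1
      exact h1
    have h3 := gen' (Subgroup.centralizer {f a})
      (by rw [Subgroup.mem_centralizer_singleton_iff])
      (by rw [Subgroup.mem_centralizer_singleton_iff]; first | exact h2 | exact h2.symm)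
    obtain ⟨g, hg, hne⟩ := notcomm (f a) (Equiv.Perm.mem_alternatingGroup.1 (f a).2) ha1
    have h4 : (⟨g, Equiv.Perm.mem_alternatingGroup.2 hg⟩ : alternatingGroup (Fin 5)) ∈ Subgroup.centralizer {f a} := by
      rw [h3]; trivial
    rw [Subgroup.mem_centralizer_singleton_iff] at h4
    have h5 := congrArg Subtype.val h4
    first | exact hne h5 | exact hne h5.symm
  -- traces
  have hxy : (H : Matrix (Fin 2) (Fin 2) ℂ).trace = (A : Matrix (Fin 2) (Fin 2) ℂ).trace ∨
      (H : Matrix (Fin 2) (Fin 2) ℂ).trace = -(A : Matrix (Fin 2) (Fin 2) ℂ).trace := by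
    obtain ⟨C, h⟩ := hconj
    have e : ((C * A * C⁻¹ : SL2C) : Matrix (Fin 2) (Fin 2) ℂ).trace = (A : Matrix (Fin 2) (Fin 2) ℂ).trace := by
      rw [Matrix.SpecialLinearGroup.coe_mul, Matrix.trace_mul_comm, ← Matrix.SpecialLinearGroup.coe_mul]
      congr 2
      simp only [inv_mul_cancel_left]
      rfl
    rcases h with h | h
    · left; rw [h, e]
    · right; rw [h, Matrix.SpecialLinearGroup.coe_neg, Matrix.trace_neg, e]
  have pmtr : ∀ g : SL2C, g = 1 ∨ g = -1 → (g : Matrix (Fin 2) (Fin 2) ℂ).trace = 2 ∨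
      (g : Matrix (Fin 2) (Fin 2) ℂ).trace = -2 := by
    rintro g (rfl | rfl)
    · left; simp
    · right; simp
  have hfr := fricke A H
  have hβA : βp A = (A : Matrix (Fin 2) (Fin 2) ℂ).trace ^ 2 - 4 := rfl
  have hβH : βp H = (H : Matrix (Fin 2) (Fin 2) ℂ).trace ^ 2 - 4 := rfl
  have hγ : γp A H = ((A * H * A⁻¹ * H⁻¹ : SL2C) : Matrix (Fin 2) (Fin 2) ℂ).trace - 2 := rfl
  -- a signed trace of the product
  obtain ⟨z, hz, hγz⟩ : ∃ z : ℂ, (z = ((A * H : SL2C) : Matrix (Fin 2) (Fin 2) ℂ).trace ∨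
      z = -((A * H : SL2C) : Matrix (Fin 2) (Fin 2) ℂ).trace) ∧
      γp A H = 2 * (A : Matrix (Fin 2) (Fin 2) ℂ).trace ^ 2 + z ^ 2
        - (A : Matrix (Fin 2) (Fin 2) ℂ).trace ^ 2 * z - 4 := by
    rcases hxy with h | h
    · exact ⟨_, Or.inl rfl, by rw [hfr, h]; ring⟩
    · exact ⟨_, Or.inr rfl, by rw [hfr, h]; ring⟩
  have hβ : βp H = (A : Matrix (Fin 2) (Fin 2) ℂ).trace ^ 2 - 4 := by
    rcases hxy with h | h <;> rw [hβH, h] <;> ring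
  have hz5 : ((A * H) ^ 5 = 1 ∨ (A * H) ^ 5 = -1) → z = 2 ∨ z = -2 ∨ z ^ 4 - 3 * z ^ 2 + 1 = 0 := by
    intro h
    rcases tr5 _ h with h | h
    · rcases pmtr _ h with h | h <;> rw [h] at hz <;> rcases hz with rfl | rfl <;> norm_num
    · right; right
      rcases hz with rfl | rfl
      · exact h
      · linear_combination h
  rcases hd a with h | h | h
  · exact absurd h hA2
  · -- order three
    left
    have hx : (A : Matrix (Fin 2) (Fin 2) ℂ).trace ^ 2 = 1 := (tr3 A h).resolve_left hA1
    have h3b : (f b : Equiv.Perm (Fin 5)) ^ 3 = 1 := by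
      rw [pw]
      obtain ⟨C, hC⟩ := hconj
      have e : (C * A * C⁻¹) ^ 3 = C * A ^ 3 * C⁻¹ := conj_pow
      change A ^ 3 = 1 ∨ A ^ 3 = -1 at h
      change H ^ 3 = 1 ∨ H ^ 3 = -1
      have : (C * A * C⁻¹) ^ 3 = 1 ∨ (C * A * C⁻¹) ^ 3 = -1 := by
        rw [e]
        rcases h with h | h <;> simp [h]
      rcases hC with hC | hC <;> rw [hC]
      · exact this
      · rw [Odd.neg_pow (by decide)]
        rcases this with h | h <;> rw [h] <;> simp
    rcases d2 (f a) ((pw a 3).2 h) (f b) h3b with ⟨i, hia, hib⟩ | ⟨h5, hc⟩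
    · exfalso
      have h3 := gen' ((MulAction.stabilizer (Equiv.Perm (Fin 5)) i).comap (alternatingGroup (Fin 5)).subtype)
        hia hib
      obtain ⟨g, hg, hne⟩ := notfix i
      have h4 : (⟨g, Equiv.Perm.mem_alternatingGroup.2 hg⟩ : alternatingGroup (Fin 5)) ∈
        (MulAction.stabilizer (Equiv.Perm (Fin 5)) i).comap (alternatingGroup (Fin 5)).subtype := by
        rw [h3]; trivial
      exact hne h4
    · have h5' := (pw (a * b) 5).1 (by rw [map_mul]; exact h5)
      have hc' := (pw (a * b * a⁻¹ * b⁻¹) 3).1 (by simp only [map_mul, map_inv]; exact hc)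
      have hw := (tr3 (A * H * A⁻¹ * H⁻¹) hc').resolve_left hcomm
      have := alg3 z _ (by linear_combination hγz - hγ + (2 - z) * hx) (hz5 h5') hw
      rw [hβA, hβ, hγ, this, hx]
      norm_num
  · -- order five
    right
    have hx := (tr5 A h).resolve_left hA1
    generalize hu' : (A : Matrix (Fin 2) (Fin 2) ℂ).trace ^ 2 = u at *
    have hu : u ^ 2 - 3 * u + 1 = 0 := by rw [← hx, ← hu']; ring
    have hw2 := hd (a * b * a⁻¹ * b⁻¹)
    change ((A * H * A⁻¹ * H⁻¹) ^ 2 = 1 ∨ (A * H * A⁻¹ * H⁻¹) ^ 2 = -1) ∨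
      ((A * H * A⁻¹ * H⁻¹) ^ 3 = 1 ∨ (A * H * A⁻¹ * H⁻¹) ^ 3 = -1) ∨
      ((A * H * A⁻¹ * H⁻¹) ^ 5 = 1 ∨ (A * H * A⁻¹ * H⁻¹) ^ 5 = -1) at hw2
    have hw3 := hw2.imp (fun h => (tr2 _ h).resolve_left hcomm)
      (Or.imp (fun h => (tr3 _ h).resolve_left hcomm) (fun h => (tr5 _ h).resolve_left hcomm))
    have hz3 : z = 2 ∨ z = -2 ∨ z = 0 ∨ z ^ 2 = 1 ∨ z ^ 4 - 3 * z ^ 2 + 1 = 0 := by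
      have pm : (A * H = 1 ∨ A * H = -1) → z = 2 ∨ z = -2 := by
        intro h
        rcases pmtr _ h with h | h <;> rw [h] at hz <;> rcases hz with rfl | rfl <;> norm_num
      have hab := hd (a * b)
      have eab : ((a * b : Subgroup.closure {A, H}) : SL2C) = A * H := rfl
      rw [eab] at hab
      rcases hab with h | h | h
      · rcases tr2 (A * H) h with h | h
        · exact (pm h).imp_right Or.inl
        · right; right; left
          rcases hz with rfl | rfl <;> rw [h]; simp
      · rcases tr3 (A * H) h with h | h
        · exact (pm h).imp_right Or.inl
        · right; right; right; left
          rcases hz with rfl | rfl <;> linear_combination h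
      · exact (hz5 h).imp_right (Or.imp_right fun h => Or.inr (Or.inr h))
    have := alg5 u z _ hu (by linear_combination hγz - hγ) hz3 hw3
    rw [hβA, hβ, hγ, this]
    rcases root5 u hu with h | h <;> [left; right] <;> rw [h] <;> push_cast <;>
      refine ⟨?_, ?_, ?_⟩ <;> ring

end
end
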